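/- Consider the fully connected sign network with i.i.d. standard normal weights: ω_0 = ω ∈ {-1,1}^n, ω_t = sign(θ_t ω_{t-1}) for t = 1,...,T_n, with θ_1,...,θ_{T_n} independent n×n matrices of i.i.d. N(0,1) entries, and f_{n,T_n}(ω) = h_n(ω_{T_n}). Let 1/2 ≥ ε_n ↓ 0 with n·ε_n → ∞ and let K_n satisfy K_n/log(1/ε_n) → ∞. If T_n ≥ K_n, then for any Boolean functions {h_n}, {f_{n,T_n}} is quenched quantitatively noise sensitive at level {ε_n}: for every δ > 0 there is N such that for all n ≥ N, P_Θ(Cov_{ω,ω^{ε_n}}(f_{n,T_n}(ω), f_{n,T_n}(ω^{ε_n})) ≤ δ) ≥ 1 − δ. -/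

import Mathlib

open Finset Filter MeasureTheory ProbabilityTheory

noncomputable section

/-- The ±1 real value of a Boolean bit. -/
def chi (b : Bool) : ℝ := if b then 1 else -1

/-- The joint probability of the pair `(ω, ω^ε)`, where `ω` is uniform on `{-1,1}^n` and
`ω^ε` flips each bit of `ω` independently with probability `ε`. -/
def pairWeight (n : ℕ) (ε : ℝ) (ω η : Fin n → Bool) : ℝ :=
  (1 / 2) ^ n * ∏ i, (if ω i = η i then 1 - ε else ε)

/-- Expectation of `g ω` for `ω` uniform on `{-1,1}^n`. -/
def unifMean (n : ℕ) (g : (Fin n → Bool) → ℝ) : ℝ := (∑ ω, g ω) / 2 ^ n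

/-- Expectation of `F ω ω^ε` over the correlated pair `(ω, ω^ε)`. -/
def pairMean (n : ℕ) (ε : ℝ) (F : (Fin n → Bool) → (Fin n → Bool) → ℝ) : ℝ :=
  ∑ ω, ∑ η, pairWeight n ε ω η * F ω η

/-- `Cov_{ω,ω^ε}(g(ω), g(ω^ε))` for a fixed real-valued function `g` on the cube. -/
def noiseCov (n : ℕ) (ε : ℝ) (g : (Fin n → Bool) → ℝ) : ℝ :=
  pairMean n ε (fun ω η => g ω * g η) - unifMean n g ^ 2

/-- `P_{ω,ω^ε}(f(ω) ≠ f(ω^ε))` for a fixed Boolean function `f`. -/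
def disagreeProb (n : ℕ) (ε : ℝ) (f : (Fin n → Bool) → Bool) : ℝ :=
  pairMean n ε (fun ω η => if f ω = f η then 0 else 1)

/-- The sign function with the convention `sgn z = 1` if `z > 0` and `-1` otherwise. -/
def sgn (x : ℝ) : ℝ := if 0 < x then 1 else -1

/-- One layer of the sign network: `x ↦ sign(θ x)`, coordinatewise. -/
def layerMap (n : ℕ) (θ : Fin n → Fin n → ℝ) (x : Fin n → ℝ) : Fin n → ℝ :=
  fun i => sgn (∑ j, θ i j * x j)

/-- The full network: `ω_T` obtained from `ω_0 = x` by `ω_t = sign(θ_t ω_{t-1})`. -/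
def network (n T : ℕ) (Θ : Fin T → Fin n → Fin n → ℝ) (x : Fin n → ℝ) : Fin n → ℝ :=
  (List.ofFn Θ).foldl (fun y θ => layerMap n θ y) x

/-- The Boolean output `f_{n,T}(ω) = h(ω_T)` of the network. -/
def boolOut (n T : ℕ) (h : (Fin n → Bool) → Bool) (Θ : Fin T → Fin n → Fin n → ℝ)
    (ω : Fin n → Bool) : Bool :=
  h fun i => decide (0 < network n T Θ (fun j => chi (ω j)) i)

/-- The ±1-valued output of the network. -/
def netOut (n T : ℕ) (h : (Fin n → Bool) → Bool) (Θ : Fin T → Fin n → Fin n → ℝ)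
    (ω : Fin n → Bool) : ℝ :=
  chi (boolOut n T h Θ ω)

/-- The law of the i.i.d. standard normal weights `Θ = (θ_1, ..., θ_T)`. -/
def weightMeas (n T : ℕ) : Measure (Fin T → Fin n → Fin n → ℝ) :=
  Measure.pi fun _ => Measure.pi fun _ => Measure.pi fun _ => gaussianReal 0 1

/-- The annealed covariance `Cov_{Θ,ω,ω^ε}(f_{n,T}(ω), f_{n,T}(ω^ε))`. -/
def annealedCov (n T : ℕ) (ε : ℝ) (h : (Fin n → Bool) → Bool) : ℝ :=
  (∫ Θ, pairMean n ε (fun ω η => netOut n T h Θ ω * netOut n T h Θ η) ∂weightMeas n T)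
    - (∫ Θ, unifMean n (netOut n T h Θ) ∂weightMeas n T) ^ 2

/-!
Two inputs at Hamming distance `d` are sent by one Gaussian layer to a uniform pair whose distance
is binomial with parameters `n` and `arccos (1 - 2d/n) / π` (Sheppard's formula), so the distance of
two trajectories is a Markov chain, absorbed at `0` and `n`. In terms of the correlation
`r = 1 - 2d/n` the mean of a step is `r ↦ (2/π) arcsin r`, which contracts the Lyapunov function
`r² / (1 - r²)` by the factor `10/11`; the binomial fluctuations increase it by `O(1/n)` (relative
and absolute), and the chance of being absorbed in one step is `O(1/√n)`. The Lyapunov function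
starts at `O(1/ε_n)`, so it is small after `O(log (1/ε_n)) = O(log n)` layers, long before
absorption matters.

Given the previous layers, the last layer turns the pair into a uniform point and a copy with noise
`p`, and the Walsh expansion bounds its noise covariance by `|1 - 2p|`. Further layers can be
absorbed into the observable, since the bound holds for every observable with values in `[-1, 1]`.
As the noise covariance is nonnegative, a small mean over the weights gives the quenched statement
by Markov's inequality.
-/

/-! ### Walsh expansion of the noise covariance -/

/-- The Walsh–Fourier coefficient `E[g(ω) ∏_{i ∈ S} ω_i]` of a function on the cube. -/
def walshCoeff (n : ℕ) (g : (Fin n → Bool) → ℝ) (S : Finset (Fin n)) : ℝ :=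
  unifMean n fun ω => g ω * ∏ i ∈ S, chi (ω i)

lemma unifMean_mono {n : ℕ} {f g : (Fin n → Bool) → ℝ} (h : ∀ ω, f ω ≤ g ω) :
    unifMean n f ≤ unifMean n g :=
  div_le_div_of_nonneg_right (sum_le_sum fun ω _ => h ω) (by positivity)

lemma unifMean_const (n : ℕ) (c : ℝ) : unifMean n (fun _ => c) = c := by
  simp [unifMean]

lemma pairWeight_eq_sum_powerset (n : ℕ) (p : ℝ) (ω η : Fin n → Bool) :
    pairWeight n p ω η = ∑ S : Finset (Fin n),
      (1 - 2 * p) ^ #S * ((∏ i ∈ S, chi (ω i)) / 2 ^ n * ((∏ i ∈ S, chi (η i)) / 2 ^ n)) := by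
  have flip_factor (i : Fin n) : (if ω i = η i then 1 - p else p)
      = 1 / 2 * ((1 - 2 * p) * (chi (ω i) * chi (η i)) + 1) := by
    cases ω i <;> cases η i <;> simp [chi] <;> ring
  simp only [pairWeight, flip_factor, prod_mul_distrib, prod_const, card_univ, Fintype.card_fin,
    prod_add_one, powerset_univ, mul_sum, one_div, inv_pow]
  exact sum_congr rfl fun S _ => by ring

lemma pairMean_mul_self (n : ℕ) (p : ℝ) (g : (Fin n → Bool) → ℝ) :
    pairMean n p (fun ω η => g ω * g η) =
      ∑ S : Finset (Fin n), (1 - 2 * p) ^ #S * walshCoeff n g S ^ 2 := by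
  simp only [pairMean, pairWeight_eq_sum_powerset, walshCoeff, unifMean, sum_div, sq,
    mul_sum, sum_mul]
  symm
  rw [sum_comm]
  refine sum_congr rfl fun ω _ => ?_
  rw [sum_comm]
  exact sum_congr rfl fun η _ => sum_congr rfl fun S _ => by ring

lemma walshCoeff_empty (n : ℕ) (g : (Fin n → Bool) → ℝ) : walshCoeff n g ∅ = unifMean n g := by
  simp [walshCoeff]

lemma pairWeight_zero (n : ℕ) (ω η : Fin n → Bool) :
    pairWeight n 0 ω η = if ω = η then (1 / 2) ^ n else 0 := by
  simp only [pairWeight, sub_zero, prod_ite_zero, prod_const_one, funext_iff, mem_univ,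
    true_imp_iff, mul_ite, mul_one, mul_zero]

lemma pairMean_zero (n : ℕ) (F : (Fin n → Bool) → (Fin n → Bool) → ℝ) :
    pairMean n 0 F = unifMean n (fun ω => F ω ω) := by
  simp [pairMean, pairWeight_zero, unifMean, ← mul_sum, div_eq_inv_mul]

lemma sum_walshCoeff_sq (n : ℕ) (g : (Fin n → Bool) → ℝ) :
    ∑ S : Finset (Fin n), walshCoeff n g S ^ 2 = unifMean n (fun ω => g ω ^ 2) := by
  simpa [pairMean_zero, ← sq] using (pairMean_mul_self n 0 g).symm

lemma noiseCov_eq_sum_walshCoeff (n : ℕ) (p : ℝ) (g : (Fin n → Bool) → ℝ) :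
    noiseCov n p g =
      ∑ S ∈ univ.erase (∅ : Finset (Fin n)), (1 - 2 * p) ^ #S * walshCoeff n g S ^ 2 := by
  rw [noiseCov, pairMean_mul_self, ← add_sum_erase univ _ (mem_univ ∅), walshCoeff_empty]
  simp

lemma noiseCov_nonneg {n : ℕ} {p : ℝ} (hp : p ≤ 1 / 2) (g : (Fin n → Bool) → ℝ) :
    0 ≤ noiseCov n p g := by
  have : 0 ≤ 1 - 2 * p := by linarith
  rw [noiseCov_eq_sum_walshCoeff]
  positivity

lemma noiseCov_le {n : ℕ} {p : ℝ} (hp₀ : 0 ≤ p) (hp₁ : p ≤ 1) (g : (Fin n → Bool) → ℝ) :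
    noiseCov n p g ≤ |1 - 2 * p| * unifMean n (fun ω => g ω ^ 2) := by
  have abs_le_one : |1 - 2 * p| ≤ 1 := abs_le.mpr ⟨by linarith, by linarith⟩
  have pow_card_le {S : Finset (Fin n)} (hS : S ≠ ∅) : (1 - 2 * p) ^ #S ≤ |1 - 2 * p| :=
    calc (1 - 2 * p) ^ #S ≤ |1 - 2 * p| ^ #S := by rw [← abs_pow]; exact le_abs_self _
      _ ≤ |1 - 2 * p| := pow_le_of_le_one (abs_nonneg _) abs_le_one (by simpa using hS)
  calc noiseCov n p g
      = ∑ S ∈ univ.erase (∅ : Finset (Fin n)), (1 - 2 * p) ^ #S * walshCoeff n g S ^ 2 :=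
        noiseCov_eq_sum_walshCoeff n p g
    _ ≤ ∑ S ∈ univ.erase (∅ : Finset (Fin n)), |1 - 2 * p| * walshCoeff n g S ^ 2 :=
        sum_le_sum fun S hS =>
          mul_le_mul_of_nonneg_right (pow_card_le (ne_of_mem_erase hS)) (sq_nonneg _)
    _ ≤ ∑ S, |1 - 2 * p| * walshCoeff n g S ^ 2 :=
        sum_le_sum_of_subset_of_nonneg (erase_subset _ _) fun S _ _ => by positivity
    _ = |1 - 2 * p| * unifMean n (fun ω => g ω ^ 2) := by rw [← mul_sum, sum_walshCoeff_sq]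

/-! ### Binomial means -/

/-- The expectation of `φ` under the binomial distribution with parameters `n` and `p`. -/
def binomMean (n : ℕ) (p : ℝ) (φ : ℕ → ℝ) : ℝ :=
  ∑ k ∈ range (n + 1), n.choose k * p ^ k * (1 - p) ^ (n - k) * φ k

lemma binomMean_add (n : ℕ) (p : ℝ) (φ ψ : ℕ → ℝ) :
    binomMean n p (fun k => φ k + ψ k) = binomMean n p φ + binomMean n p ψ := by
  simp only [binomMean, mul_add, sum_add_distrib]

lemma binomMean_const_mul (n : ℕ) (p c : ℝ) (φ : ℕ → ℝ) :
    binomMean n p (fun k => c * φ k) = c * binomMean n p φ := by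
  simp only [binomMean, mul_sum]
  exact sum_congr rfl fun k _ => by ring

lemma binomMean_const (n : ℕ) (p c : ℝ) : binomMean n p (fun _ => c) = c := by
  have total_mass : ∑ k ∈ range (n + 1), (n.choose k : ℝ) * p ^ k * (1 - p) ^ (n - k) = 1 := by
    simpa [mul_comm, mul_assoc, mul_left_comm] using (add_pow p (1 - p) n).symm
  rw [binomMean, ← sum_mul, total_mass, one_mul]

lemma binomMean_mono {n : ℕ} {p : ℝ} (hp₀ : 0 ≤ p) (hp₁ : p ≤ 1) {φ ψ : ℕ → ℝ}
    (h : ∀ k ≤ n, φ k ≤ ψ k) : binomMean n p φ ≤ binomMean n p ψ := by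
  have : 0 ≤ 1 - p := by linarith
  exact sum_le_sum fun k hk => mul_le_mul_of_nonneg_left
    (h k (Nat.lt_succ_iff.mp (mem_range.mp hk))) (by positivity)

lemma binomMean_reflect (n : ℕ) (p : ℝ) (φ : ℕ → ℝ) :
    binomMean n p (fun k => φ (n - k)) = binomMean n (1 - p) φ := by
  rw [binomMean, ← sum_range_reflect]
  refine sum_congr rfl fun k hk => ?_
  have hk : k ≤ n := Nat.lt_succ_iff.mp (mem_range.mp hk)
  rw [show n + 1 - 1 - k = n - k by omega, Nat.choose_symm hk, Nat.sub_sub_self hk, sub_sub_cancel]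
  ring

lemma binomMean_add_reflect (n : ℕ) (p : ℝ) (φ : ℕ → ℝ) :
    binomMean n p (fun k => φ k + φ (n - k)) = binomMean n p φ + binomMean n (1 - p) φ := by
  rw [binomMean_add, binomMean_reflect]

lemma binomMean_zero (n : ℕ) (φ : ℕ → ℝ) : binomMean n 0 φ = φ 0 := by
  rw [binomMean, sum_eq_single 0 (fun k _ hk => by simp [hk]) (by simp)]
  simp

lemma binomMean_one (n : ℕ) (φ : ℕ → ℝ) : binomMean n 1 φ = φ n := by
  simpa [binomMean_zero] using (binomMean_reflect n 0 φ).symm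

/-- The configuration `ω` with the bits in `S` flipped. -/
def flipBits {n : ℕ} (ω : Fin n → Bool) (S : Finset (Fin n)) : Fin n → Bool :=
  fun i => if i ∈ S then !ω i else ω i

lemma eq_flipBits_iff {n : ℕ} (ω : Fin n → Bool) (S : Finset (Fin n)) (i : Fin n) :
    ω i = flipBits ω S i ↔ i ∉ S := by
  by_cases hi : i ∈ S <;> simp [flipBits, hi]

lemma flipBits_filter_ne {n : ℕ} (ω η : Fin n → Bool) :
    flipBits ω (univ.filter fun i => ω i ≠ η i) = η := by
  ext i
  cases hω : ω i <;> cases hη : η i <;> simp [flipBits, hω, hη]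

lemma hammingDist_flipBits {n : ℕ} (ω : Fin n → Bool) (S : Finset (Fin n)) :
    hammingDist ω (flipBits ω S) = #S := by
  simp [hammingDist, eq_flipBits_iff]

lemma pairWeight_flipBits {n : ℕ} (p : ℝ) (ω : Fin n → Bool) (S : Finset (Fin n)) :
    pairWeight n p ω (flipBits ω S) = (1 / 2) ^ n * (p ^ #S * (1 - p) ^ (n - #S)) := by
  have card_notMem : #(univ.filter fun i => i ∉ S) = n - #S := by
    rw [← compl_filter, card_compl, filter_univ_mem, Fintype.card_fin]
  simp [pairWeight, eq_flipBits_iff, prod_ite, card_notMem, mul_comm]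

lemma pairMean_hammingDist (n : ℕ) (p : ℝ) (φ : ℕ → ℝ) :
    pairMean n p (fun ω η => φ (hammingDist ω η)) = binomMean n p φ := by
  have sum_neighbours (ω : Fin n → Bool) :
      ∑ η, pairWeight n p ω η * φ (hammingDist ω η) = (1 / 2) ^ n * binomMean n p φ :=
    calc ∑ η, pairWeight n p ω η * φ (hammingDist ω η)
        = ∑ S : Finset (Fin n), (1 / 2) ^ n * (p ^ #S * (1 - p) ^ (n - #S) * φ #S) :=
          sum_nbij' (fun η => univ.filter fun i => ω i ≠ η i) (flipBits ω) (by simp) (by simp)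
            (fun η _ => flipBits_filter_ne ω η) (fun S _ => by simp [eq_flipBits_iff])
            (fun η _ => by
              conv_lhs => rw [← flipBits_filter_ne ω η]
              rw [hammingDist_flipBits, pairWeight_flipBits, mul_assoc])
      _ = (1 / 2) ^ n * binomMean n p φ := by
          rw [← mul_sum, ← powerset_univ,
            sum_powerset_apply_card (fun k => p ^ k * (1 - p) ^ (n - k) * φ k), card_univ,
            Fintype.card_fin, binomMean]
          simp only [nsmul_eq_mul, mul_assoc]
  simp [pairMean, sum_neighbours]

/-- Size biasing: `(k + 1) * (n + 1).choose (k + 1) = (n + 1) * n.choose k`. -/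
lemma binomMean_succ_div_le {n : ℕ} {p : ℝ} (hp₀ : 0 < p) (hp₁ : p ≤ 1) {φ : ℕ → ℝ}
    (hφ : 0 ≤ φ 0) :
    binomMean n p (fun k => φ (k + 1) / (k + 1)) ≤ binomMean (n + 1) p φ / ((n + 1) * p) := by
  have : 0 ≤ 1 - p := by linarith
  rw [le_div_iff₀ (by positivity), binomMean, binomMean, sum_range_succ' _ (n + 1), sum_mul]
  refine le_add_of_le_of_nonneg (sum_le_sum fun k _ => le_of_eq ?_) (by positivity)
  have size_bias : ((n : ℝ) + 1) * n.choose k = (n + 1).choose (k + 1) * (k + 1) :=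
    mod_cast Nat.add_one_mul_choose_eq n k
  rw [Nat.add_sub_add_right]
  field_simp
  linear_combination p ^ (k + 1) * (1 - p) ^ (n - k) * φ (k + 1) * size_bias

lemma binomMean_inv_succ_le (n : ℕ) {p : ℝ} (hp₀ : 0 < p) (hp₁ : p ≤ 1) :
    binomMean n p (fun k => 1 / ((k : ℝ) + 1)) ≤ 1 / ((n + 1) * p) := by
  simpa only [binomMean_const] using binomMean_succ_div_le hp₀ hp₁ (φ := fun _ => 1) zero_le_one

lemma binomMean_inv_succ_mul_succ_le (n : ℕ) {p : ℝ} (hp₀ : 0 < p) (hp₁ : p ≤ 1) :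
    binomMean n p (fun k => 1 / (((k : ℝ) + 1) * (k + 2))) ≤ 1 / ((n + 1) * (n + 2) * p ^ 2) :=
  calc binomMean n p (fun k => 1 / (((k : ℝ) + 1) * (k + 2)))
      = binomMean n p (fun k => 1 / (((k + 1 : ℕ) : ℝ) + 1) / (k + 1)) := by
        congr 1 with k; push_cast; field_simp; ring
    _ ≤ binomMean (n + 1) p (fun k => 1 / ((k : ℝ) + 1)) / ((n + 1) * p) :=
        binomMean_succ_div_le hp₀ hp₁ (φ := fun k => 1 / ((k : ℝ) + 1)) (by norm_num)
    _ ≤ 1 / (((n + 1 : ℕ) + 1) * p) / ((n + 1) * p) := by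
        gcongr; exact binomMean_inv_succ_le (n + 1) hp₀ hp₁
    _ = 1 / ((n + 1) * (n + 2) * p ^ 2) := by push_cast; field_simp; ring

/-! ### Contraction of the correlation under the arcsine law -/

/-- The correlation of the signs of two standard Gaussians with correlation `r`
(Sheppard's formula). -/
def arcsineCorr (r : ℝ) : ℝ := 2 / Real.pi * Real.arcsin r

/-- The Lyapunov function of the correlation process. At `r = ±1` division by zero makes it `0`,
so the absorbing states have to be accounted for separately. -/
def potential (r : ℝ) : ℝ := r ^ 2 / (1 - r ^ 2)

lemma arcsineCorr_neg (r : ℝ) : arcsineCorr (-r) = -arcsineCorr r := by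
  simp [arcsineCorr]

lemma arcsineCorr_one : arcsineCorr 1 = 1 := by
  rw [arcsineCorr, Real.arcsin_one]
  field_simp

lemma arcsineCorr_le_one (r : ℝ) : arcsineCorr r ≤ 1 := by
  rw [arcsineCorr, div_mul_eq_mul_div, div_le_one Real.pi_pos]
  linarith [Real.arcsin_le_pi_div_two r]

lemma neg_one_le_arcsineCorr (r : ℝ) : -1 ≤ arcsineCorr r := by
  linarith [arcsineCorr_neg r, arcsineCorr_le_one (-r)]

lemma potential_nonneg {r : ℝ} (h₀ : -1 ≤ r) (h₁ : r ≤ 1) : 0 ≤ potential r :=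
  div_nonneg (sq_nonneg r) (by nlinarith)

lemma sq_le_potential {r : ℝ} (h₀ : -1 < r) (h₁ : r < 1) : r ^ 2 ≤ potential r :=
  le_div_self (sq_nonneg r) (by nlinarith) (by linarith [sq_nonneg r])

lemma potential_one_sub_two_mul {x : ℝ} (h₀ : 0 < x) (h₁ : x < 1) :
    potential (1 - 2 * x) = 1 / 4 * (1 / x + 1 / (1 - x)) - 1 := by
  have : 0 < 1 - x := by linarith
  rw [potential, show 1 - (1 - 2 * x) ^ 2 = 4 * (x * (1 - x)) by ring]
  field_simp
  ring

lemma sq_two_div_pi_mul_le_of_le_one {α : ℝ} (h₀ : 0 < α) (h₁ : α ≤ 1) :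
    (2 / Real.pi * α) ^ 2 * (1 + Real.cos α ^ 2 / 10) ≤ Real.sin α ^ 2 := by
  have two_div_pi_le : 2 / Real.pi ≤ 2 / 3.14 := by gcongr; exact Real.pi_gt_d2.le
  have sin_ge : 3 / 4 * α ≤ Real.sin α := by
    nlinarith [Real.sin_gt_sub_cube h₀, pow_le_one₀ h₀.le h₁ (n := 2)]
  calc (2 / Real.pi * α) ^ 2 * (1 + Real.cos α ^ 2 / 10)
      ≤ (2 / 3.14 * α) ^ 2 * (1 + 1 / 10) := by gcongr; exact Real.cos_sq_le_one α
    _ ≤ (3 / 4 * α) ^ 2 := by nlinarith [sq_nonneg α]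
    _ ≤ Real.sin α ^ 2 := by gcongr

lemma sq_one_sub_two_div_pi_mul_le {β : ℝ} (h₀ : 0 ≤ β) (h₁ : β ≤ 0.6) :
    (1 - 2 / Real.pi * β) ^ 2 * (1 + Real.sin β ^ 2 / 10) ≤ Real.cos β ^ 2 := by
  have le_two_div_pi : 0.63 ≤ 2 / Real.pi := by
    rw [le_div_iff₀ Real.pi_pos]; linarith [Real.pi_lt_d2]
  have two_div_pi_le : 2 / Real.pi ≤ 1 := by
    rw [div_le_one Real.pi_pos]; exact Real.two_le_pi
  have sin_le : Real.sin β ^ 2 ≤ β ^ 2 := Real.sin_sq_le_sq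
  have cos_ge : 1 - 0.3 * β ≤ Real.cos β := by
    nlinarith [Real.one_sub_sq_div_two_le_cos (x := β)]
  calc (1 - 2 / Real.pi * β) ^ 2 * (1 + Real.sin β ^ 2 / 10)
      ≤ (1 - 0.63 * β) ^ 2 * (1 + β ^ 2 / 10) := by gcongr; nlinarith
    _ ≤ (1 - 0.3 * β) ^ 2 := by nlinarith [mul_nonneg h₀ (sq_nonneg β), mul_nonneg h₀ h₀]
    _ ≤ Real.cos β ^ 2 := by gcongr; linarith

lemma sq_two_div_pi_mul_le {α : ℝ} (h₀ : 0 ≤ α) (h₁ : α ≤ Real.pi / 2) :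
    (2 / Real.pi * α) ^ 2 * (1 + Real.cos α ^ 2 / 10) ≤ Real.sin α ^ 2 := by
  rcases h₀.eq_or_lt with rfl | hpos
  · simp
  rcases le_total α 1 with hα | hα
  · exact sq_two_div_pi_mul_le_of_le_one hpos hα
  · have h := sq_one_sub_two_div_pi_mul_le (β := Real.pi / 2 - α) (by linarith)
      (by linarith [Real.pi_lt_d2])
    rw [Real.sin_pi_div_two_sub, Real.cos_pi_div_two_sub] at h
    convert h using 3
    field_simp
    ring

lemma arcsineCorr_sq_mul_le {r : ℝ} (h₀ : -1 ≤ r) (h₁ : r ≤ 1) :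
    arcsineCorr r ^ 2 * (1 + (1 - r ^ 2) / 10) ≤ r ^ 2 := by
  wlog hr : 0 ≤ r generalizing r
  · simpa [arcsineCorr_neg] using this (r := -r) (by linarith) (by linarith) (by linarith)
  have h := sq_two_div_pi_mul_le (Real.arcsin_nonneg.mpr hr) (Real.arcsin_le_pi_div_two r)
  rwa [Real.cos_sq', Real.sin_arcsin h₀ h₁] at h

lemma arcsineCorr_sq_lt_one {r : ℝ} (h₀ : -1 < r) (h₁ : r < 1) : arcsineCorr r ^ 2 < 1 := by
  have hr : 0 < 1 - r ^ 2 := by nlinarith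
  nlinarith [arcsineCorr_sq_mul_le h₀.le h₁.le]

lemma potential_arcsineCorr_le {r : ℝ} (h₀ : -1 < r) (h₁ : r < 1) :
    potential (arcsineCorr r) ≤ 10 / 11 * potential r := by
  have hr : 0 < 1 - r ^ 2 := by nlinarith
  have hρ : 0 < 1 - arcsineCorr r ^ 2 := sub_pos.mpr (arcsineCorr_sq_lt_one h₀ h₁)
  rw [potential, potential, ← mul_div_assoc, div_le_div_iff₀ hρ hr]
  nlinarith [arcsineCorr_sq_mul_le h₀.le h₁.le]

/-! ### The Hamming distance chain -/

/-- The correlation `⟨ω, η⟩ / n` of two configurations in `{-1,1}^n` at Hamming distance `k`. -/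
def hammingCorr (n k : ℕ) : ℝ := 1 - 2 * (k / n)

/-- The probability that a Gaussian row gives opposite signs to two configurations in `{-1,1}^n`
at Hamming distance `k`; see `flipProb_eq_flipRate`. -/
def flipRate (n k : ℕ) : ℝ := (1 - arcsineCorr (hammingCorr n k)) / 2

/-- The transition operator of the Hamming distance chain: from distance `k`, one layer leads to a
binomial distance with parameters `n` and `flipRate n k`. -/
def hammingStep (n : ℕ) (φ : ℕ → ℝ) (k : ℕ) : ℝ := binomMean n (flipRate n k) φ

/-- The indicator of the two absorbing states of the Hamming distance chain. -/
def absorbed (n k : ℕ) : ℝ := if k = 0 ∨ k = n then 1 else 0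

/-- A majorant of `1 / k` for `k ≥ 1` whose binomial mean can be bounded by size biasing. -/
def invMajorant (k : ℕ) : ℝ := 1 / (k + 1) + 3 * (1 / ((k + 1) * (k + 2)))

lemma hammingCorr_zero (n : ℕ) : hammingCorr n 0 = 1 := by
  simp [hammingCorr]

lemma hammingCorr_sub {n k : ℕ} (hn : n ≠ 0) (hk : k ≤ n) :
    hammingCorr n (n - k) = -hammingCorr n k := by
  rw [hammingCorr, hammingCorr, Nat.cast_sub hk]
  field_simp
  ring

lemma hammingCorr_self {n : ℕ} (hn : n ≠ 0) : hammingCorr n n = -1 := by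
  simpa [hammingCorr_zero] using hammingCorr_sub hn n.zero_le

lemma hammingCorr_le_one (n k : ℕ) : hammingCorr n k ≤ 1 := by
  have : (0 : ℝ) ≤ k / n := by positivity
  rw [hammingCorr]
  linarith

lemma neg_one_le_hammingCorr {n k : ℕ} (hk : k ≤ n) : -1 ≤ hammingCorr n k := by
  have : (k : ℝ) / n ≤ 1 := div_le_one_of_le₀ (mod_cast hk) n.cast_nonneg
  rw [hammingCorr]
  linarith

lemma hammingCorr_lt_one {n k : ℕ} (h₀ : 0 < k) (h₁ : k < n) : hammingCorr n k < 1 := by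
  have : (0 : ℝ) < k / n := div_pos (mod_cast h₀) (mod_cast h₀.trans h₁)
  rw [hammingCorr]
  linarith

lemma neg_one_lt_hammingCorr {n k : ℕ} (h₀ : 0 < k) (h₁ : k < n) : -1 < hammingCorr n k := by
  have := hammingCorr_lt_one (Nat.sub_pos_of_lt h₁) (Nat.sub_lt (h₀.trans h₁) h₀)
  rw [hammingCorr_sub (h₀.trans h₁).ne' h₁.le] at this
  linarith

lemma potential_hammingCorr_nonneg {n k : ℕ} (hk : k ≤ n) : 0 ≤ potential (hammingCorr n k) :=
  potential_nonneg (neg_one_le_hammingCorr hk) (hammingCorr_le_one n k)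

lemma potential_hammingCorr_eq {n k : ℕ} (h₀ : 0 < k) (h₁ : k < n) :
    potential (hammingCorr n k) = n / 4 * (1 / k + 1 / (n - k : ℕ)) - 1 := by
  have hk : (0 : ℝ) < k := mod_cast h₀
  have hkn : (k : ℝ) < n := mod_cast h₁
  have hn : (0 : ℝ) < n := hk.trans hkn
  have hsub : (n : ℝ) - k ≠ 0 := by linarith
  rw [hammingCorr, potential_one_sub_two_mul (by positivity) ((div_lt_one hn).mpr hkn),
    Nat.cast_sub h₁.le]
  field_simp

lemma one_div_le_invMajorant {k : ℕ} (hk : 0 < k) : 1 / (k : ℝ) ≤ invMajorant k := by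
  have hk : (1 : ℝ) ≤ k := mod_cast hk
  have gap : invMajorant k - 1 / k = 2 * (k - 1) / (k * (k + 1) * (k + 2)) := by
    rw [invMajorant]; field_simp; ring
  have : 0 ≤ 2 * ((k : ℝ) - 1) / (k * (k + 1) * (k + 2)) :=
    div_nonneg (by linarith) (by positivity)
  linarith

lemma binomMean_invMajorant_le {n : ℕ} (hn : 0 < n) {p : ℝ} (hp₀ : 0 < p) (hp₁ : p ≤ 1) :
    binomMean n p invMajorant ≤ (1 / p + 3 / (n * p ^ 2)) / n :=
  have : (0 : ℝ) < n := mod_cast hn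
  calc binomMean n p invMajorant
      = binomMean n p (fun k => 1 / ((k : ℝ) + 1)) +
          3 * binomMean n p (fun k => 1 / (((k : ℝ) + 1) * (k + 2))) := by
        rw [← binomMean_const_mul, ← binomMean_add]; rfl
    _ ≤ 1 / ((n + 1) * p) + 3 * (1 / ((n + 1) * (n + 2) * p ^ 2)) := by
        gcongr
        · exact binomMean_inv_succ_le n hp₀ hp₁
        · exact binomMean_inv_succ_mul_succ_le n hp₀ hp₁
    _ ≤ 1 / (n * p) + 3 * (1 / (n * n * p ^ 2)) := by gcongr <;> linarith
    _ = (1 / p + 3 / (n * p ^ 2)) / n := by field_simp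

lemma potential_hammingCorr_le {n k : ℕ} (hn : 2 ≤ n) (hk : k ≤ n) :
    potential (hammingCorr n k) ≤ n / 4 * (invMajorant k + invMajorant (n - k)) - 1 := by
  have hn' : (2 : ℝ) ≤ n := mod_cast hn
  have at_end : 0 ≤ n / 4 * (invMajorant 0 + invMajorant n) - 1 := by
    rw [show n / 4 * (invMajorant 0 + invMajorant n) - 1 =
      (5 * (n - 2) * (n + 1) * (n + 2) + 2 * (n + 1) * (n + 2) + 2 * n * (n + 5)) /
        (8 * ((n : ℝ) + 1) * (n + 2)) by simp [invMajorant]; field_simp; ring]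
    have : (0 : ℝ) ≤ n - 2 := by linarith
    positivity
  rcases hk.eq_or_lt with rfl | hlt
  · simpa [hammingCorr_self (show k ≠ 0 by omega), potential, add_comm] using at_end
  rcases k.eq_zero_or_pos with rfl | hpos
  · simpa [hammingCorr_zero, potential] using at_end
  rw [potential_hammingCorr_eq hpos hlt]
  gcongr
  · exact one_div_le_invMajorant hpos
  · exact one_div_le_invMajorant (Nat.sub_pos_of_lt hlt)

lemma binomMean_potential_le {n : ℕ} (hn : 2 ≤ n) {p : ℝ} (hp₀ : 0 < p) (hp₁ : p < 1) :
    binomMean n p (fun k => potential (hammingCorr n k)) ≤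
      potential (1 - 2 * p) + 3 / (4 * n) * (1 / p ^ 2 + 1 / (1 - p) ^ 2) := by
  have hq₀ : 0 < 1 - p := by linarith
  have hn₀ : 0 < n := by omega
  have : (0 : ℝ) < n := mod_cast hn₀
  calc binomMean n p (fun k => potential (hammingCorr n k))
      ≤ binomMean n p (fun k => n / 4 * (invMajorant k + invMajorant (n - k)) + -1) :=
        binomMean_mono hp₀.le hp₁.le fun k hk => potential_hammingCorr_le hn hk
    _ = n / 4 * (binomMean n p invMajorant + binomMean n (1 - p) invMajorant) + -1 := by
        rw [binomMean_add, binomMean_const_mul, binomMean_const, binomMean_add_reflect]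
    _ ≤ n / 4 * ((1 / p + 3 / (n * p ^ 2)) / n + (1 / (1 - p) + 3 / (n * (1 - p) ^ 2)) / n)
          + -1 := by
        gcongr
        · exact binomMean_invMajorant_le hn₀ hp₀ hp₁.le
        · exact binomMean_invMajorant_le hn₀ hq₀ (by linarith)
    _ = potential (1 - 2 * p) + 3 / (4 * n) * (1 / p ^ 2 + 1 / (1 - p) ^ 2) := by
        rw [potential_one_sub_two_mul hp₀ hp₁]; field_simp; ring

lemma binomMean_absorbed_le {n : ℕ} (hn : 0 < n) {p : ℝ} (hp₀ : 0 < p) (hp₁ : p < 1) :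
    binomMean n p (absorbed n) ≤ 1 / (n * p) + 1 / (n * (1 - p)) := by
  have hq₀ : 0 < 1 - p := by linarith
  have hn' : (0 : ℝ) < n := mod_cast hn
  calc binomMean n p (absorbed n)
      ≤ binomMean n p (fun k => 1 / ((k : ℝ) + 1) + 1 / (((n - k : ℕ) : ℝ) + 1)) := by
        refine binomMean_mono hp₀.le hp₁.le fun k _ => ?_
        unfold absorbed
        split_ifs with hk
        · rcases hk with rfl | rfl
          · simpa using (by positivity : (0 : ℝ) ≤ ((n : ℝ) + 1)⁻¹)
          · simpa using (by positivity : (0 : ℝ) ≤ ((k : ℝ) + 1)⁻¹)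
        · positivity
    _ = binomMean n p (fun k => 1 / ((k : ℝ) + 1)) +
          binomMean n (1 - p) (fun k => 1 / ((k : ℝ) + 1)) :=
        binomMean_add_reflect n p fun k => 1 / ((k : ℝ) + 1)
    _ ≤ 1 / ((n + 1) * p) + 1 / ((n + 1) * (1 - p)) :=
        add_le_add (binomMean_inv_succ_le n hp₀ hp₁.le)
          (binomMean_inv_succ_le n hq₀ (by linarith))
    _ ≤ 1 / (n * p) + 1 / (n * (1 - p)) := by gcongr <;> linarith

lemma one_sub_two_mul_flipRate (n k : ℕ) :
    1 - 2 * flipRate n k = arcsineCorr (hammingCorr n k) := by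
  rw [flipRate]
  ring

lemma flipRate_nonneg (n k : ℕ) : 0 ≤ flipRate n k := by
  linarith [one_sub_two_mul_flipRate n k, arcsineCorr_le_one (hammingCorr n k)]

lemma flipRate_le_one (n k : ℕ) : flipRate n k ≤ 1 := by
  linarith [one_sub_two_mul_flipRate n k, neg_one_le_arcsineCorr (hammingCorr n k)]

lemma flipRate_zero (n : ℕ) : flipRate n 0 = 0 := by
  simp [flipRate, hammingCorr_zero, arcsineCorr_one]

lemma flipRate_sub {n k : ℕ} (hn : n ≠ 0) (hk : k ≤ n) :
    flipRate n (n - k) = 1 - flipRate n k := by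
  rw [flipRate, flipRate, hammingCorr_sub hn hk, arcsineCorr_neg]
  ring

lemma flipRate_self {n : ℕ} (hn : n ≠ 0) : flipRate n n = 1 := by
  simpa [flipRate_zero] using flipRate_sub hn n.zero_le

lemma flipRate_eq_arccos (n k : ℕ) :
    flipRate n k = Real.arccos (hammingCorr n k) / Real.pi := by
  rw [flipRate, arcsineCorr, Real.arccos]
  field_simp

lemma le_flipRate_sq {n k : ℕ} (hk : k ≤ n) : 0.4 * ((k : ℝ) / n) ≤ flipRate n k ^ 2 := by
  have cos_ge := Real.one_sub_sq_div_two_le_cos (x := Real.arccos (hammingCorr n k))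
  rw [Real.cos_arccos (neg_one_le_hammingCorr hk) (hammingCorr_le_one n k)] at cos_ge
  have arccos_sq_ge : 4 * ((k : ℝ) / n) ≤ Real.arccos (hammingCorr n k) ^ 2 := by
    unfold hammingCorr at cos_ge ⊢
    linarith
  have pi_sq_le : Real.pi ^ 2 ≤ 10 := by nlinarith [Real.pi_lt_d2, Real.pi_pos]
  have : (0 : ℝ) ≤ k / n := by positivity
  rw [flipRate_eq_arccos, div_pow, le_div_iff₀ (by positivity)]
  nlinarith

section Drift

variable {n k : ℕ}

lemma flipRate_pos (h₀ : 0 < k) (h₁ : k < n) : 0 < flipRate n k := by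
  have : (0 : ℝ) < k / n := div_pos (mod_cast h₀) (mod_cast h₀.trans h₁)
  refine (flipRate_nonneg n k).lt_of_ne' (pow_ne_zero_iff two_ne_zero |>.mp (ne_of_gt ?_))
  linarith [le_flipRate_sq h₁.le]

lemma flipRate_lt_one (h₀ : 0 < k) (h₁ : k < n) : flipRate n k < 1 := by
  have := flipRate_pos (Nat.sub_pos_of_lt h₁) (Nat.sub_lt (h₀.trans h₁) h₀)
  rw [flipRate_sub (h₀.trans h₁).ne' h₁.le] at this
  linarith

lemma one_div_flipRate_sq_le (h₀ : 0 < k) (h₁ : k < n) :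
    1 / flipRate n k ^ 2 ≤ 2.5 * n * (1 / k) := by
  have : (0 : ℝ) < k := mod_cast h₀
  have hn : (0 : ℝ) < n := mod_cast h₀.trans h₁
  calc 1 / flipRate n k ^ 2 ≤ 1 / (0.4 * ((k : ℝ) / n)) := by gcongr; exact le_flipRate_sq h₁.le
    _ = 2.5 * n * (1 / k) := by field_simp; norm_num

lemma one_div_flipRate_sq_add_le (h₀ : 0 < k) (h₁ : k < n) :
    1 / flipRate n k ^ 2 + 1 / (1 - flipRate n k) ^ 2 ≤
      10 * (potential (hammingCorr n k) + 1) := by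
  have hn := h₀.trans h₁
  have h_right := one_div_flipRate_sq_le (Nat.sub_pos_of_lt h₁) (Nat.sub_lt hn h₀)
  rw [flipRate_sub hn.ne' h₁.le] at h_right
  rw [potential_hammingCorr_eq h₀ h₁]
  linarith [one_div_flipRate_sq_le h₀ h₁]

lemma hammingStep_potential_le (hn : 176 ≤ n) (h₀ : 0 < k) (h₁ : k < n) :
    hammingStep n (fun j => potential (hammingCorr n j)) k ≤
      21 / 22 * potential (hammingCorr n k) + 8 / n := by
  have hn' : (176 : ℝ) ≤ n := mod_cast hn
  have hV := potential_hammingCorr_nonneg h₁.le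
  have fluctuation : 15 / (2 * (n : ℝ)) ≤ 1 / 22 := by
    rw [div_le_iff₀ (by positivity)]; linarith
  calc hammingStep n (fun j => potential (hammingCorr n j)) k
      ≤ potential (1 - 2 * flipRate n k) +
          3 / (4 * n) * (1 / flipRate n k ^ 2 + 1 / (1 - flipRate n k) ^ 2) :=
        binomMean_potential_le (by omega) (flipRate_pos h₀ h₁) (flipRate_lt_one h₀ h₁)
    _ ≤ 10 / 11 * potential (hammingCorr n k) +
          3 / (4 * n) * (10 * (potential (hammingCorr n k) + 1)) := by
        rw [one_sub_two_mul_flipRate]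
        gcongr
        · exact potential_arcsineCorr_le (neg_one_lt_hammingCorr h₀ h₁) (hammingCorr_lt_one h₀ h₁)
        · exact one_div_flipRate_sq_add_le h₀ h₁
    _ = (10 / 11 + 15 / (2 * n)) * potential (hammingCorr n k) + 7.5 / n := by field_simp; ring
    _ ≤ (10 / 11 + 1 / 22) * potential (hammingCorr n k) + 8 / n := by gcongr; norm_num
    _ = 21 / 22 * potential (hammingCorr n k) + 8 / n := by ring

lemma one_div_mul_flipRate_le (h₀ : 0 < k) (h₁ : k < n) : 1 / (n * flipRate n k) ≤ 2 / √n := by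
  have hn : (0 : ℝ) < n := mod_cast h₀.trans h₁
  have hk : (1 : ℝ) ≤ k := mod_cast h₀
  have sq_sqrt : √(n : ℝ) ^ 2 = n := Real.sq_sqrt hn.le
  have flipRate_ge : 1 / (2 * √n) ≤ flipRate n k := by
    refine le_of_sq_le_sq ?_ (flipRate_nonneg n k)
    calc (1 / (2 * √(n : ℝ))) ^ 2 = 0.25 * (1 / n) := by
          rw [div_pow, mul_pow, sq_sqrt]; field_simp; norm_num
      _ ≤ 0.4 * (k / n) := by gcongr; norm_num
      _ ≤ flipRate n k ^ 2 := le_flipRate_sq h₁.le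
  calc 1 / (n * flipRate n k) ≤ 1 / (n * (1 / (2 * √n))) := by gcongr
    _ = 2 / √n := by
      field_simp
      linarith

lemma hammingStep_absorbed_le (h₀ : 0 < k) (h₁ : k < n) :
    hammingStep n (absorbed n) k ≤ 4 / √n := by
  have hn := h₀.trans h₁
  have h_right := one_div_mul_flipRate_le (Nat.sub_pos_of_lt h₁) (Nat.sub_lt hn h₀)
  rw [flipRate_sub hn.ne' h₁.le] at h_right
  calc hammingStep n (absorbed n) k
      ≤ 1 / (n * flipRate n k) + 1 / (n * (1 - flipRate n k)) :=
        binomMean_absorbed_le hn (flipRate_pos h₀ h₁) (flipRate_lt_one h₀ h₁)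
    _ ≤ 2 / √n + 2 / √n := add_le_add (one_div_mul_flipRate_le h₀ h₁) h_right
    _ = 4 / √n := by ring

end Drift

/-- The bounds propagated along the Hamming distance chain: absorption, plus a multiple of the
Lyapunov function, plus a constant. -/
def lyapunovBound (n : ℕ) (a b : ℝ) (k : ℕ) : ℝ :=
  absorbed n k + a * potential (hammingCorr n k) + b

lemma binomMean_lyapunovBound (n : ℕ) (p a b : ℝ) :
    binomMean n p (lyapunovBound n a b) =
      binomMean n p (absorbed n) +
        a * binomMean n p (fun k => potential (hammingCorr n k)) + b := by
  unfold lyapunovBound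
  rw [binomMean_add, binomMean_add, binomMean_const_mul, binomMean_const]

lemma lyapunovBound_of_absorbed {n k : ℕ} (hn : n ≠ 0) (hk : k = 0 ∨ k = n) (a b : ℝ) :
    lyapunovBound n a b k = 1 + b := by
  rcases hk with rfl | rfl <;>
    simp [lyapunovBound, absorbed, potential, hammingCorr_zero, hammingCorr_self, hn]

lemma hammingStep_of_absorbed {n k : ℕ} (hn : n ≠ 0) (hk : k = 0 ∨ k = n) (φ : ℕ → ℝ) :
    hammingStep n φ k = φ k := by
  rcases hk with rfl | rfl
  · rw [hammingStep, flipRate_zero, binomMean_zero]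
  · rw [hammingStep, flipRate_self hn, binomMean_one]

lemma hammingStep_mono {n : ℕ} {φ ψ : ℕ → ℝ} (h : ∀ k ≤ n, φ k ≤ ψ k) (k : ℕ) :
    hammingStep n φ k ≤ hammingStep n ψ k :=
  binomMean_mono (flipRate_nonneg n k) (flipRate_le_one n k) h

lemma hammingStep_lyapunovBound_le {n k : ℕ} (hn : 176 ≤ n) (hk : k ≤ n) {a : ℝ} (ha : 0 ≤ a)
    (b : ℝ) :
    hammingStep n (lyapunovBound n a b) k ≤
      lyapunovBound n (21 / 22 * a) (b + (4 + 8 * a) / √n) k := by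
  have hn₀ : n ≠ 0 := by omega
  by_cases habs : k = 0 ∨ k = n
  · rw [hammingStep_of_absorbed hn₀ habs, lyapunovBound_of_absorbed hn₀ habs,
      lyapunovBound_of_absorbed hn₀ habs]
    have : 0 ≤ (4 + 8 * a) / √n := by positivity
    linarith
  have h₀ : 0 < k := by omega
  have h₁ : k < n := by omega
  have sqrt_le : √(n : ℝ) ≤ n := Real.sqrt_le_self_iff.mpr (.inr (mod_cast hn₀.bot_lt))
  calc hammingStep n (lyapunovBound n a b) k
      = hammingStep n (absorbed n) k +
          a * hammingStep n (fun j => potential (hammingCorr n j)) k + b :=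
        binomMean_lyapunovBound n (flipRate n k) a b
    _ ≤ 4 / √n + a * (21 / 22 * potential (hammingCorr n k) + 8 / √n) + b := by
        gcongr
        · exact hammingStep_absorbed_le h₀ h₁
        · exact (hammingStep_potential_le hn h₀ h₁).trans (by gcongr)
    _ = lyapunovBound n (21 / 22 * a) (b + (4 + 8 * a) / √n) k := by
        rw [lyapunovBound, absorbed, if_neg habs]; ring

lemma abs_one_sub_two_mul_flipRate_le {n k : ℕ} (hn : n ≠ 0) (hk : k ≤ n) {s : ℝ} (hs : 0 < s) :
    |1 - 2 * flipRate n k| ≤ lyapunovBound n (1 / (2 * s)) (s / 2) k := by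
  rw [one_sub_two_mul_flipRate]
  by_cases habs : k = 0 ∨ k = n
  · rw [lyapunovBound_of_absorbed hn habs]
    have := abs_le.mpr ⟨neg_one_le_arcsineCorr (hammingCorr n k), arcsineCorr_le_one _⟩
    linarith
  have h₀ : -1 < hammingCorr n k := neg_one_lt_hammingCorr (by omega) (by omega)
  have h₁ : hammingCorr n k < 1 := hammingCorr_lt_one (by omega) (by omega)
  obtain ⟨hρ₀, hρ₁⟩ := sq_lt_one_iff_abs_lt_one _ |>.mp (arcsineCorr_sq_lt_one h₀ h₁) |> abs_lt.mp
  have sq_le : arcsineCorr (hammingCorr n k) ^ 2 ≤ potential (hammingCorr n k) := by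
    linarith [sq_le_potential hρ₀ hρ₁, potential_arcsineCorr_le h₀ h₁,
      potential_hammingCorr_nonneg hk]
  calc |arcsineCorr (hammingCorr n k)|
      ≤ 1 / (2 * s) * |arcsineCorr (hammingCorr n k)| ^ 2 + s / 2 := by
        have am_gm := div_nonneg (sq_nonneg (|arcsineCorr (hammingCorr n k)| - s))
          (mul_nonneg zero_le_two hs.le)
        have : 1 / (2 * s) * |arcsineCorr (hammingCorr n k)| ^ 2 + s / 2 -
          |arcsineCorr (hammingCorr n k)| =
            (|arcsineCorr (hammingCorr n k)| - s) ^ 2 / (2 * s) := by field_simp; ring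
        linarith
    _ ≤ 1 / (2 * s) * potential (hammingCorr n k) + s / 2 := by rw [sq_abs]; gcongr
    _ = lyapunovBound n (1 / (2 * s)) (s / 2) k := by
        rw [lyapunovBound, absorbed, if_neg habs, zero_add]

lemma iterate_hammingStep_le {n : ℕ} (hn : 176 ≤ n) {a b : ℝ} (ha : 0 ≤ a) {φ : ℕ → ℝ}
    (hφ : ∀ k ≤ n, φ k ≤ lyapunovBound n a b k) (t : ℕ) :
    ∀ k ≤ n, (hammingStep n)^[t] φ k ≤
      lyapunovBound n ((21 / 22) ^ t * a) (b + t * ((4 + 8 * a) / √n)) k := by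
  induction t with
  | zero => simpa using hφ
  | succ t ih =>
    intro k hk
    have decay_le : (21 / 22 : ℝ) ^ t * a ≤ a :=
      mul_le_of_le_one_left ha (pow_le_one₀ (by norm_num) (by norm_num))
    rw [Function.iterate_succ_apply']
    calc hammingStep n ((hammingStep n)^[t] φ) k
        ≤ hammingStep n (lyapunovBound n ((21 / 22) ^ t * a) (b + t * ((4 + 8 * a) / √n))) k :=
          hammingStep_mono ih k
      _ ≤ lyapunovBound n (21 / 22 * ((21 / 22) ^ t * a))
            (b + t * ((4 + 8 * a) / √n) + (4 + 8 * ((21 / 22) ^ t * a)) / √n) k :=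
          hammingStep_lyapunovBound_le hn hk (by positivity) _
      _ ≤ lyapunovBound n (21 / 22 * ((21 / 22) ^ t * a))
            (b + t * ((4 + 8 * a) / √n) + (4 + 8 * a) / √n) k := by
          unfold lyapunovBound
          gcongr
      _ = lyapunovBound n ((21 / 22) ^ (t + 1) * a)
            (b + (t + 1 : ℕ) * ((4 + 8 * a) / √n)) k := by
          push_cast
          congr 1 <;> ring

/-! ### Sheppard's formula -/

lemma gaussianPDFReal_zero_one (x : ℝ) :
    gaussianPDFReal 0 1 x = (√(2 * Real.pi))⁻¹ * Real.exp (-(x ^ 2 / 2)) := by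
  simp [gaussianPDFReal_def, neg_div]

lemma gaussianPDFReal_zero_one_le_exp (x : ℝ) :
    gaussianPDFReal 0 1 x ≤ Real.exp (-(x ^ 2 / 2)) := by
  rw [gaussianPDFReal_zero_one]
  refine mul_le_of_le_one_left (Real.exp_nonneg _) (inv_le_one_of_one_le₀ ?_)
  rw [Real.one_le_sqrt]
  linarith [Real.pi_gt_three]

lemma integral_Ioi_mul_exp_neg_mul_sq {b : ℝ} (hb : 0 < b) :
    ∫ r in Set.Ioi (0 : ℝ), r * Real.exp (-b * r ^ 2) = (2 * b)⁻¹ := by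
  have h := integral_rpow_mul_exp_neg_mul_rpow (p := 2) (q := 1) two_pos (by norm_num) hb
  norm_num [Real.rpow_neg_one] at h
  rw [mul_inv, mul_comm]
  simpa using h

lemma integral_gaussianPDFReal_mul_comp_abs_mul (u : ℝ) :
    ∫ x, gaussianPDFReal 0 1 x * (|x| * gaussianPDFReal 0 1 (|x| * u)) =
      Real.pi⁻¹ * (1 + u ^ 2)⁻¹ := by
  have integrand_eq (x : ℝ) : gaussianPDFReal 0 1 x * (|x| * gaussianPDFReal 0 1 (|x| * u)) =
      (2 * Real.pi)⁻¹ * (|x| * Real.exp (-((1 + u ^ 2) / 2) * |x| ^ 2)) := by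
    have normalization : (√(2 * Real.pi))⁻¹ * (√(2 * Real.pi))⁻¹ = (2 * Real.pi)⁻¹ := by
      rw [← mul_inv, Real.mul_self_sqrt (by positivity)]
    rw [gaussianPDFReal_zero_one, gaussianPDFReal_zero_one, ← normalization,
      show -((1 + u ^ 2) / 2) * |x| ^ 2 = -(x ^ 2 / 2) + -((|x| * u) ^ 2 / 2) by
        rw [← sq_abs x]; ring, Real.exp_add]
    ring
  simp only [integrand_eq]
  rw [integral_const_mul,
    integral_comp_abs (f := fun r => r * Real.exp (-((1 + u ^ 2) / 2) * r ^ 2)),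
    integral_Ioi_mul_exp_neg_mul_sq (by positivity)]
  field_simp

lemma gaussianReal_abs_lt_mul_abs {s : ℝ} (hs : 0 ≤ s) (x : ℝ) :
    (gaussianReal 0 1).real {y | |y| < s * |x|} =
      ∫ u in (-s)..s, |x| * gaussianPDFReal 0 1 (|x| * u) := by
  have slice_eq : {y : ℝ | |y| < s * |x|} = Set.Ioo (|x| * (-s)) (|x| * s) := by
    ext y; simp [abs_lt, mul_comm]
  rw [slice_eq, Measure.real, gaussianReal_apply_eq_integral _ one_ne_zero,
    ENNReal.toReal_ofReal (integral_nonneg fun _ => gaussianPDFReal_nonneg _ _ _),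
    ← integral_Ioc_eq_integral_Ioo, ← intervalIntegral.integral_of_le,
    intervalIntegral.integral_const_mul, intervalIntegral.mul_integral_comp_mul_left]
  nlinarith [abs_nonneg x]

lemma integrable_gaussianPDFReal_mul_comp_abs_mul (s : ℝ) :
    Integrable (Function.uncurry fun x u : ℝ =>
      gaussianPDFReal 0 1 x * (|x| * gaussianPDFReal 0 1 (|x| * u)))
      (volume.prod (volume.restrict (Set.Ioc (-s) s))) := by
  have integrable_majorant : Integrable (fun x : ℝ => |x * Real.exp (-(1 / 2) * x ^ 2)|) :=
    (integrable_mul_exp_neg_mul_sq (by norm_num)).abs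
  have := measurable_gaussianPDFReal 0 1
  refine (integrable_majorant.mul_prod (g := fun _ : ℝ => (1 : ℝ)) (integrable_const 1)).mono' ?_
    (Eventually.of_forall fun ⟨x, u⟩ => ?_)
  · simp only [Function.uncurry_def]
    fun_prop
  have pdf_le_one : gaussianPDFReal 0 1 (|x| * u) ≤ 1 :=
    (gaussianPDFReal_zero_one_le_exp _).trans (Real.exp_le_one_iff.mpr (by
      linarith [sq_nonneg (|x| * u)]))
  have hx := gaussianPDFReal_nonneg 0 1 x
  have hu := gaussianPDFReal_nonneg 0 1 (|x| * u)
  calc ‖gaussianPDFReal 0 1 x * (|x| * gaussianPDFReal 0 1 (|x| * u))‖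
      = gaussianPDFReal 0 1 x * (|x| * gaussianPDFReal 0 1 (|x| * u)) :=
        Real.norm_of_nonneg (by positivity)
    _ ≤ Real.exp (-(x ^ 2 / 2)) * (|x| * 1) := by
        gcongr
        exact gaussianPDFReal_zero_one_le_exp x
    _ = |x * Real.exp (-(1 / 2) * x ^ 2)| * 1 := by
        rw [abs_mul, Real.abs_exp]; ring_nf

lemma gaussianReal_prod_abs_lt_mul_abs {s : ℝ} (hs : 0 ≤ s) :
    ((gaussianReal 0 1).prod (gaussianReal 0 1)).real {z : ℝ × ℝ | |z.2| < s * |z.1|} =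
      2 * Real.arctan s / Real.pi := by
  have hmeas : MeasurableSet {z : ℝ × ℝ | |z.2| < s * |z.1|} :=
    measurableSet_lt (by fun_prop) (by fun_prop)
  have hle : -s ≤ s := by linarith
  calc ((gaussianReal 0 1).prod (gaussianReal 0 1)).real {z : ℝ × ℝ | |z.2| < s * |z.1|}
      = ∫ x, (gaussianReal 0 1).real {y | |y| < s * |x|} ∂gaussianReal 0 1 := by
        rw [← integral_indicator_one hmeas,
          integral_prod _ ((integrable_const 1).indicator hmeas)]
        refine integral_congr_ae (Eventually.of_forall fun x => ?_)
        exact integral_indicator_one (measurableSet_lt (by fun_prop) (by fun_prop))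
    _ = ∫ x, ∫ u in Set.Ioc (-s) s,
          gaussianPDFReal 0 1 x * (|x| * gaussianPDFReal 0 1 (|x| * u)) := by
        rw [integral_gaussianReal_eq_integral_smul one_ne_zero]
        simp only [gaussianReal_abs_lt_mul_abs hs, smul_eq_mul,
          intervalIntegral.integral_of_le hle, integral_const_mul]
    _ = ∫ u in (-s)..s, Real.pi⁻¹ * (1 + u ^ 2)⁻¹ := by
        rw [integral_integral_swap (integrable_gaussianPDFReal_mul_comp_abs_mul s),
          intervalIntegral.integral_of_le hle]
        simp only [integral_gaussianPDFReal_mul_comp_abs_mul]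
    _ = 2 * Real.arctan s / Real.pi := by
        rw [intervalIntegral.integral_const_mul, integral_inv_one_add_sq, Real.arctan_neg]
        ring

lemma gaussianReal_zero_eq_map_sqrt_mul (v : NNReal) :
    gaussianReal 0 v = (gaussianReal 0 1).map (fun t => √(v : ℝ) * t) := by
  rw [gaussianReal_map_const_mul]
  congr 1
  · simp
  · ext; simp

lemma gaussianReal_prod_abs_lt_abs {v : NNReal} (hv : v ≠ 0) (w : NNReal) :
    ((gaussianReal 0 v).prod (gaussianReal 0 w)).real {z : ℝ × ℝ | |z.1| < |z.2|} =
      2 * Real.arctan (√w / √v) / Real.pi := by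
  have hmeas : MeasurableSet {z : ℝ × ℝ | |z.1| < |z.2|} :=
    measurableSet_lt (by fun_prop) (by fun_prop)
  have hv_pos : 0 < √(v : ℝ) := Real.sqrt_pos.mpr (by positivity)
  rw [← gaussianReal_prod_abs_lt_mul_abs (by positivity), ← Measure.prod_swap,
    map_measureReal_apply measurable_swap hmeas, gaussianReal_zero_eq_map_sqrt_mul v,
    gaussianReal_zero_eq_map_sqrt_mul w, Measure.map_prod_map _ _ (by fun_prop) (by fun_prop),
    map_measureReal_apply (by fun_prop) (measurable_swap hmeas)]
  congr 1
  ext z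
  change |√(v : ℝ) * z.2| < |√(w : ℝ) * z.1| ↔ |z.2| < √w / √v * |z.1|
  rw [abs_mul, abs_mul, abs_of_pos hv_pos, abs_of_nonneg (Real.sqrt_nonneg _), div_mul_eq_mul_div,
    lt_div_iff₀ hv_pos, mul_comm √(v : ℝ)]

lemma two_mul_arctan_sqrt_div_sqrt {v w : ℝ} (hv : 0 < v) (hw : 0 ≤ w) :
    2 * Real.arctan (√w / √v) = Real.arccos ((v - w) / (v + w)) := by
  have cos_eq : Real.cos (2 * Real.arctan (√w / √v)) = (v - w) / (v + w) := by
    rw [Real.cos_two_mul, Real.cos_sq_arctan, div_pow, Real.sq_sqrt hv.le, Real.sq_sqrt hw]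
    field_simp
    ring
  rw [← cos_eq, Real.arccos_cos]
  · have := Real.arctan_nonneg.mpr (by positivity : 0 ≤ √w / √v)
    positivity
  · linarith [Real.arctan_lt_pi_div_two (√w / √v)]

lemma gaussianReal_prod_abs_lt_abs_eq_arccos {v w : NNReal} (hvw : v + w ≠ 0) :
    ((gaussianReal 0 v).prod (gaussianReal 0 w)).real {z : ℝ × ℝ | |z.1| < |z.2|} =
      Real.arccos (((v : ℝ) - w) / (v + w)) / Real.pi := by
  rcases eq_or_ne v 0 with rfl | hv
  · have hw : w ≠ 0 := by simpa using hvw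
    have : NullSingletonClass (gaussianReal 0 w) := nullSingletonClass_gaussianReal hw
    have preimage_eq : Prod.mk 0 ⁻¹' {z : ℝ × ℝ | |z.1| < |z.2|} = {0}ᶜ := by
      ext y; simp
    have hw' : (w : ℝ) ≠ 0 := by exact_mod_cast hw
    rw [gaussianReal_zero_var, Measure.dirac_prod, map_measureReal_apply (by fun_prop)
      (measurableSet_lt (by fun_prop) (by fun_prop)), preimage_eq,
      probReal_compl_eq_one_sub (measurableSet_singleton 0)]
    simp [hw', Real.pi_ne_zero, Measure.real]
  · rw [gaussianReal_prod_abs_lt_abs hv, two_mul_arctan_sqrt_div_sqrt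
      (NNReal.coe_pos.mpr (pos_of_ne_zero hv)) w.coe_nonneg]

/-! ### One row of weights -/

/-- The law of one row of a weight matrix. -/
abbrev rowMeas (n : ℕ) : Measure (Fin n → ℝ) := Measure.pi fun _ => gaussianReal 0 1

/-- The output bit, on input `x`, of the neuron with weights `v`. -/
def rowSign {n : ℕ} (x : Fin n → Bool) (v : Fin n → ℝ) : Bool :=
  decide (0 < ∑ j, v j * chi (x j))

/-- The probability that a neuron with Gaussian weights distinguishes the inputs `x` and `y`. -/
def flipProb {n : ℕ} (x y : Fin n → Bool) : ℝ :=
  (rowMeas n).real {v | rowSign x v ≠ rowSign y v}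

section Row

variable {n : ℕ}

lemma iIndepFun_mul_rowMeas (c : Fin n → ℝ) :
    iIndepFun (fun j (v : Fin n → ℝ) => v j * c j) (rowMeas n) :=
  iIndepFun_pi (X := fun j (t : ℝ) => t * c j) fun j => by fun_prop

lemma map_sum_mul_rowMeas (c : Fin n → ℝ) (S : Finset (Fin n)) :
    (rowMeas n).map (∑ j ∈ S, fun v : Fin n → ℝ => v j * c j) =
      gaussianReal 0 (∑ j ∈ S, ‖c j‖₊ ^ 2) := by
  have map_coord (j : Fin n) :
      (rowMeas n).map (fun v => v j * c j) = gaussianReal 0 (‖c j‖₊ ^ 2) := by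
    rw [← Function.comp_def (· * c j) (fun v : Fin n → ℝ => v j),
      ← Measure.map_map (by fun_prop) (by fun_prop),
      (measurePreserving_eval (fun _ : Fin n => gaussianReal 0 1) j).map_eq,
      gaussianReal_map_mul_const]
    congr 1
    · simp
    · ext; simp
  induction S using Finset.induction_on with
  | empty => simp [show (0 : (Fin n → ℝ) → ℝ) = fun _ => 0 from rfl, Measure.map_const]
  | insert i S hi ih =>
    rw [Finset.sum_insert hi, Finset.sum_insert hi, add_comm,
      gaussianReal_add_gaussianReal_of_indepFun
        ((iIndepFun_mul_rowMeas c).indepFun_finsetSum_of_notMem (fun j => by fun_prop) hi) ih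
        (map_coord i), zero_add, add_comm]

lemma indepFun_sum_mul_rowMeas (c : Fin n → ℝ) {R S : Finset (Fin n)} (hRS : Disjoint R S) :
    IndepFun (∑ j ∈ R, fun v : Fin n → ℝ => v j * c j) (∑ j ∈ S, fun v : Fin n → ℝ => v j * c j)
      (rowMeas n) := by
  have hblocks := ((iIndepFun_mul_rowMeas c).indepFun_finset R S hRS fun j => by fun_prop).comp
    (φ := fun w : R → ℝ => ∑ j, w j) (ψ := fun w : S → ℝ => ∑ j, w j) (by fun_prop) (by fun_prop)
  convert hblocks using 1
  all_goals
    ext v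
    simp only [Finset.sum_apply, Function.comp_apply]
    exact (Finset.sum_coe_sort _ fun j => v j * c j).symm

lemma abs_chi (b : Bool) : |chi b| = 1 := by
  cases b <;> simp [chi]

lemma map_sum_mul_chi_rowMeas (x : Fin n → Bool) (S : Finset (Fin n)) :
    (rowMeas n).map (∑ j ∈ S, fun v : Fin n → ℝ => v j * chi (x j)) = gaussianReal 0 #S := by
  have nnnorm_chi (b : Bool) : ‖chi b‖₊ = 1 := NNReal.eq (abs_chi b)
  simp [map_sum_mul_rowMeas (fun j => chi (x j)), nnnorm_chi]

lemma ae_sum_mul_chi_ne_zero (hn : n ≠ 0) (x : Fin n → Bool) :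
    ∀ᵐ v ∂rowMeas n, ∑ j, v j * chi (x j) ≠ 0 := by
  have hmap := map_sum_mul_chi_rowMeas x univ
  have : NullSingletonClass (gaussianReal 0 (#(univ : Finset (Fin n)) : NNReal)) :=
    nullSingletonClass_gaussianReal (by simpa using hn)
  have ae_ne : ∀ᵐ t ∂gaussianReal 0 (#(univ : Finset (Fin n)) : NNReal), t ≠ 0 := by
    simp [ae_iff, -Finset.card_univ]
  rw [← hmap] at ae_ne
  simpa using ae_of_ae_map (by fun_prop) ae_ne

lemma measurable_rowSign (x : Fin n → Bool) : Measurable (rowSign x) := by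
  refine measurable_to_bool ?_
  have preimage_eq : rowSign x ⁻¹' {true} = {v | 0 < ∑ j, v j * chi (x j)} := by
    ext; simp [rowSign]
  rw [preimage_eq]
  exact measurableSet_lt (by fun_prop) (by fun_prop)

lemma flipProb_nonneg (x y : Fin n → Bool) : 0 ≤ flipProb x y := measureReal_nonneg

lemma flipProb_le_one (x y : Fin n → Bool) : flipProb x y ≤ 1 := measureReal_le_one

lemma measurePreserving_neg_rowMeas :
    MeasurePreserving (fun v : Fin n → ℝ => -v) (rowMeas n) (rowMeas n) :=
  measurePreserving_pi (f := fun _ t => -t) _ _ fun _ =>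
    ⟨measurable_neg, by simpa using gaussianReal_map_neg (μ := 0) (v := 1)⟩

lemma rowSign_neg {x : Fin n → Bool} {v : Fin n → ℝ} (hv : ∑ j, v j * chi (x j) ≠ 0) :
    rowSign x (-v) = !rowSign x v := by
  rcases hv.lt_or_gt with h | h <;> simp [rowSign, h, h.le]

lemma measurableSet_rowSign_pair (x y : Fin n → Bool) (a b : Bool) :
    MeasurableSet {v | rowSign x v = a ∧ rowSign y v = b} :=
  (measurable_rowSign x (measurableSet_singleton a)).inter
    (measurable_rowSign y (measurableSet_singleton b))

lemma measureReal_rowSign_pair_not (hn : n ≠ 0) (x y : Fin n → Bool) (a b : Bool) :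
    (rowMeas n).real {v | rowSign x v = !a ∧ rowSign y v = !b} =
      (rowMeas n).real {v | rowSign x v = a ∧ rowSign y v = b} := by
  rw [← measurePreserving_neg_rowMeas.measureReal_preimage
    (measurableSet_rowSign_pair x y a b).nullMeasurableSet]
  refine measureReal_congr ?_
  filter_upwards [ae_sum_mul_chi_ne_zero hn x, ae_sum_mul_chi_ne_zero hn y] with v hx hy
  refine propext ?_
  change (rowSign x v = !a ∧ rowSign y v = !b) ↔ (rowSign x (-v) = a ∧ rowSign y (-v) = b)
  rw [rowSign_neg hx, rowSign_neg hy, Bool.not_eq_eq_eq_not, Bool.not_eq_eq_eq_not]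

lemma measureReal_rowSign_eq (x y : Fin n → Bool) :
    (rowMeas n).real {v | rowSign x v = rowSign y v} = 1 - flipProb x y := by
  rw [flipProb, ← probReal_compl_eq_one_sub]
  · congr 1
    ext v
    simp
  · exact (measurableSet_eq_fun (measurable_rowSign x) (measurable_rowSign y)).compl

lemma measureReal_rowSign_pair (hn : n ≠ 0) (x y : Fin n → Bool) (a b : Bool) :
    (rowMeas n).real {v | rowSign x v = a ∧ rowSign y v = b} =
      1 / 2 * if a = b then 1 - flipProb x y else flipProb x y := by
  have sum_eq : (rowMeas n).real {v | rowSign x v = a ∧ rowSign y v = b} +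
      (rowMeas n).real {v | rowSign x v = !a ∧ rowSign y v = !b} =
      (rowMeas n).real {v | rowSign x v = rowSign y v ↔ a = b} := by
    rw [← measureReal_union _ (measurableSet_rowSign_pair x y _ _)]
    · congr 1
      ext v
      cases hx : rowSign x v <;> cases hy : rowSign y v <;> cases a <;> cases b <;> simp [hx, hy]
    · exact Set.disjoint_left.mpr fun v h h' => by simp_all
  rw [measureReal_rowSign_pair_not hn] at sum_eq
  split_ifs with hab
  · simp only [hab, iff_true, measureReal_rowSign_eq] at sum_eq ⊢
    linarith
  · simp only [hab, iff_false] at sum_eq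
    change _ = flipProb x y at sum_eq
    linarith

lemma decide_pos_add_ne_decide_pos_sub_iff {a b : ℝ} (hadd : a + b ≠ 0) (hsub : a - b ≠ 0) :
    decide (0 < a + b) ≠ decide (0 < a - b) ↔ |a| < |b| := by
  rw [← sq_lt_sq, ne_eq, decide_eq_decide]
  rcases hadd.lt_or_gt with h | h <;> rcases hsub.lt_or_gt with h' | h'
  · simpa [h.not_gt, h'.not_gt] using by nlinarith [mul_pos_of_neg_of_neg h h']
  · simpa [h.not_gt, h'] using by nlinarith [mul_neg_of_neg_of_pos h h']
  · simpa [h, h'.not_gt] using by nlinarith [mul_neg_of_pos_of_neg h h']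
  · simpa [h, h'] using by nlinarith [mul_pos h h']

lemma sum_mul_chi_eq_add (x y : Fin n → Bool) (v : Fin n → ℝ) :
    ∑ j, v j * chi (x j) =
      ∑ j with x j = y j, v j * chi (x j) + ∑ j with x j ≠ y j, v j * chi (x j) :=
  (Finset.sum_filter_add_sum_filter_not _ _ _).symm

lemma sum_mul_chi_eq_sub (x y : Fin n → Bool) (v : Fin n → ℝ) :
    ∑ j, v j * chi (y j) =
      ∑ j with x j = y j, v j * chi (x j) - ∑ j with x j ≠ y j, v j * chi (x j) := by
  rw [← Finset.sum_filter_add_sum_filter_not univ fun j => x j = y j, sub_eq_add_neg,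
    ← Finset.sum_neg_distrib]
  congr 1 <;> refine Finset.sum_congr rfl fun j hj => ?_
  · rw [(Finset.mem_filter.mp hj).2]
  · have := (Finset.mem_filter.mp hj).2
    cases hx : x j <;> cases hy : y j <;> simp_all [chi]

theorem flipProb_eq_flipRate (hn : n ≠ 0) (x y : Fin n → Bool) :
    flipProb x y = flipRate n (hammingDist x y) := by
  set agree : (Fin n → ℝ) → ℝ := ∑ j with x j = y j, fun v => v j * chi (x j) with agree_def
  set differ : (Fin n → ℝ) → ℝ := ∑ j with x j ≠ y j, fun v => v j * chi (x j) with differ_def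
  have card_agree : #{j | x j = y j} + hammingDist x y = n := by
    rw [hammingDist, Finset.card_filter_add_card_filter_not, Finset.card_univ, Fintype.card_fin]
  have law_eq : (rowMeas n).map (fun v => (agree v, differ v)) =
      (gaussianReal 0 (#{j | x j = y j} : NNReal)).prod (gaussianReal 0 (hammingDist x y)) := by
    rw [(indepFun_iff_map_prod_eq_prod_map_map (by fun_prop) (by fun_prop)).mp
      (indepFun_sum_mul_rowMeas _ (Finset.disjoint_filter_filter_not _ _ _)),
      map_sum_mul_chi_rowMeas, map_sum_mul_chi_rowMeas, hammingDist]
  have ae_iff_abs_lt : ∀ᵐ v ∂rowMeas n,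
      (rowSign x v ≠ rowSign y v) = (|agree v| < |differ v|) := by
    filter_upwards [ae_sum_mul_chi_ne_zero hn x, ae_sum_mul_chi_ne_zero hn y] with v hx hy
    rw [sum_mul_chi_eq_add x y] at hx
    rw [sum_mul_chi_eq_sub x] at hy
    simpa [rowSign, sum_mul_chi_eq_add x y, sum_mul_chi_eq_sub x y, agree_def, differ_def] using
      decide_pos_add_ne_decide_pos_sub_iff hx hy
  calc flipProb x y
      = (rowMeas n).real ((fun v => (agree v, differ v)) ⁻¹' {z | |z.1| < |z.2|}) :=
        measureReal_congr ae_iff_abs_lt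
    _ = Real.arccos (((#{j | x j = y j} : NNReal) - (hammingDist x y : NNReal) : ℝ) /
          ((#{j | x j = y j} : NNReal) + (hammingDist x y : NNReal))) / Real.pi := by
        rw [← map_measureReal_apply (by fun_prop) (measurableSet_lt (by fun_prop) (by fun_prop)),
          law_eq, gaussianReal_prod_abs_lt_abs_eq_arccos (by exact_mod_cast card_agree ▸ hn)]
    _ = flipRate n (hammingDist x y) := by
        rw [flipRate_eq_arccos, hammingCorr]
        have : (#{j | x j = y j} : ℝ) = n - hammingDist x y := by
          rw [eq_sub_iff_add_eq]; exact_mod_cast card_agree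
        push_cast
        rw [this, sub_add_cancel]
        field_simp
        ring_nf

end Row

/-! ### Propagation of a pair of inputs -/

/-- The law of one weight matrix. -/
abbrev layerMeas (n : ℕ) : Measure (Fin n → Fin n → ℝ) := Measure.pi fun _ => rowMeas n

instance (n T : ℕ) : IsProbabilityMeasure (weightMeas n T) :=
  inferInstanceAs (IsProbabilityMeasure (Measure.pi fun _ : Fin T => layerMeas n))

/-- One layer of the sign network, acting on bits. -/
def signLayer {n : ℕ} (θ : Fin n → Fin n → ℝ) (x : Fin n → Bool) : Fin n → Bool :=
  fun i => rowSign x (θ i)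

/-- The state `ω_T` of the sign network started from `ω`, as a vector of bits. -/
def signNetwork {n T : ℕ} (Θ : Fin T → Fin n → Fin n → ℝ) (ω : Fin n → Bool) : Fin n → Bool :=
  fun i => decide (0 < network n T Θ (fun j => chi (ω j)) i)

section Network

variable {n T : ℕ}

lemma sgn_eq_chi (z : ℝ) : sgn z = chi (decide (0 < z)) := by
  simp [sgn, chi]

lemma decide_zero_lt_chi (b : Bool) : decide (0 < chi b) = b := by
  cases b <;> simp [chi]

lemma network_succ (Θ : Fin (T + 1) → Fin n → Fin n → ℝ) (x : Fin n → ℝ) :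
    network n (T + 1) Θ x =
      layerMap n (Θ (Fin.last T)) (network n T (fun t => Θ t.castSucc) x) := by
  rw [network, List.ofFn_succ_last, List.foldl_append]
  rfl

lemma signNetwork_zero (Θ : Fin 0 → Fin n → Fin n → ℝ) (ω : Fin n → Bool) :
    signNetwork Θ ω = ω :=
  funext fun _ => decide_zero_lt_chi _

lemma network_chi (Θ : Fin T → Fin n → Fin n → ℝ) (ω : Fin n → Bool) :
    network n T Θ (fun j => chi (ω j)) = fun j => chi (signNetwork Θ ω j) := by
  cases T with
  | zero => simp [signNetwork_zero, network]
  | succ T =>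
    funext i
    simp only [signNetwork, network_succ, layerMap, sgn_eq_chi, decide_zero_lt_chi]

lemma signNetwork_succ (Θ : Fin (T + 1) → Fin n → Fin n → ℝ) (ω : Fin n → Bool) :
    signNetwork Θ ω = signLayer (Θ (Fin.last T)) (signNetwork (fun t => Θ t.castSucc) ω) := by
  funext i
  rw [signNetwork, network_succ, network_chi, layerMap, sgn_eq_chi, decide_zero_lt_chi, signLayer,
    rowSign]

lemma measurable_signLayer :
    Measurable fun z : (Fin n → Fin n → ℝ) × (Fin n → Bool) => signLayer z.1 z.2 :=
  measurable_from_prod_countable_left fun x =>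
    measurable_pi_lambda _ fun i => (measurable_rowSign x).comp (measurable_pi_apply i)

lemma measurable_signNetwork (ω : Fin n → Bool) :
    Measurable fun Θ : Fin T → Fin n → Fin n → ℝ => signNetwork Θ ω := by
  induction T with
  | zero => simp only [signNetwork_zero, measurable_const]
  | succ T ih =>
    simp only [signNetwork_succ]
    have measurable_init : Measurable fun (Θ : Fin (T + 1) → Fin n → Fin n → ℝ) (t : Fin T) =>
        Θ t.castSucc := by fun_prop
    exact measurable_signLayer.comp ((measurable_pi_apply _).prodMk (ih.comp measurable_init))

lemma integrable_comp_of_finite {α β : Type*} [MeasurableSpace α] [MeasurableSpace β] [Finite β]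
    [MeasurableSingletonClass β] {μ : Measure α} [IsFiniteMeasure μ] {Z : α → β}
    (hZ : Measurable Z) (G : β → ℝ) : Integrable (fun a => G (Z a)) μ :=
  (Integrable.of_finite (f := G)).comp_measurable hZ

lemma integrable_signNetwork (Φ : ((Fin n → Bool) → Fin n → Bool) → ℝ) :
    Integrable (fun Θ => Φ (signNetwork Θ)) (weightMeas n T) :=
  integrable_comp_of_finite (measurable_pi_lambda _ measurable_signNetwork) Φ

lemma integrable_signLayer_signNetwork (Φ : ((Fin n → Bool) → Fin n → Bool) → ℝ) :
    Integrable (fun z => Φ fun ω => signLayer z.1 (signNetwork z.2 ω))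
      ((layerMeas n).prod (weightMeas n T)) :=
  integrable_comp_of_finite (measurable_pi_lambda _ fun ω => measurable_signLayer.comp
    (measurable_fst.prodMk ((measurable_signNetwork ω).comp measurable_snd))) Φ

lemma integral_signNetwork_succ (Φ : ((Fin n → Bool) → Fin n → Bool) → ℝ) :
    ∫ Θ, Φ (signNetwork Θ) ∂weightMeas n (T + 1) =
      ∫ z, Φ (fun ω => signLayer z.1 (signNetwork z.2 ω))
        ∂(layerMeas n).prod (weightMeas n T) := by
  simp only [funext (signNetwork_succ _), ← Fin.succAbove_last]
  exact (measurePreserving_piFinSuccAbove (fun _ : Fin (T + 1) => layerMeas n)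
    (Fin.last T)).integral_comp' (g := fun z => Φ fun ω => signLayer z.1 (signNetwork z.2 ω))

lemma measureReal_signLayer_pair (hn : n ≠ 0) (x y ω η : Fin n → Bool) :
    (layerMeas n).real {θ | signLayer θ x = ω ∧ signLayer θ y = η} =
      pairWeight n (flipProb x y) ω η := by
  have event_eq : {θ | signLayer θ x = ω ∧ signLayer θ y = η} =
      Set.univ.pi fun i => {v | rowSign x v = ω i ∧ rowSign y v = η i} := by
    ext θ
    simp [signLayer, funext_iff, forall_and]
  rw [event_eq, Measure.real, Measure.pi_pi, ENNReal.toReal_prod]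
  change ∏ i, (rowMeas n).real {v | rowSign x v = ω i ∧ rowSign y v = η i} = _
  simp only [measureReal_rowSign_pair hn, Finset.prod_mul_distrib, Finset.prod_const,
    Finset.card_univ, Fintype.card_fin, pairWeight]

lemma integral_signLayer_pair (hn : n ≠ 0) (F : (Fin n → Bool) → (Fin n → Bool) → ℝ)
    (x y : Fin n → Bool) :
    ∫ θ, F (signLayer θ x) (signLayer θ y) ∂layerMeas n = pairMean n (flipProb x y) F := by
  have measurable_layer (x : Fin n → Bool) : Measurable fun θ => signLayer θ x :=
    measurable_signLayer.comp (measurable_id.prodMk measurable_const)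
  have hmeas := (measurable_layer x).prodMk (measurable_layer y)
  have := Measure.isProbabilityMeasure_map (μ := layerMeas n) hmeas.aemeasurable
  rw [← integral_map (f := fun z : (Fin n → Bool) × (Fin n → Bool) => F z.1 z.2) hmeas.aemeasurable
    (measurable_of_finite _).aestronglyMeasurable, integral_fintype Integrable.of_finite,
    Fintype.sum_prod_type, pairMean]
  refine Finset.sum_congr rfl fun ω _ => Finset.sum_congr rfl fun η _ => ?_
  rw [map_measureReal_apply hmeas (measurableSet_singleton _), smul_eq_mul,
    ← measureReal_signLayer_pair hn]
  simp [Set.preimage, Prod.ext_iff]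

lemma integral_signNetwork_pair_succ (hn : n ≠ 0) (F : (Fin n → Bool) → (Fin n → Bool) → ℝ)
    (x y : Fin n → Bool) :
    ∫ Θ, F (signNetwork Θ x) (signNetwork Θ y) ∂weightMeas n (T + 1) =
      ∫ Θ, pairMean n (flipProb (signNetwork Θ x) (signNetwork Θ y)) F ∂weightMeas n T := by
  let Φ : ((Fin n → Bool) → Fin n → Bool) → ℝ := fun φ => F (φ x) (φ y)
  calc ∫ Θ, Φ (signNetwork Θ) ∂weightMeas n (T + 1)
      = ∫ Θ, ∫ θ, Φ (fun ω => signLayer θ (signNetwork Θ ω)) ∂layerMeas n ∂weightMeas n T := by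
        rw [integral_signNetwork_succ,
          integral_prod_symm _ (integrable_signLayer_signNetwork Φ)]
    _ = ∫ Θ, pairMean n (flipProb (signNetwork Θ x) (signNetwork Θ y)) F ∂weightMeas n T := by
        simp only [Φ, integral_signLayer_pair hn]

theorem integral_hammingDist_signNetwork (hn : n ≠ 0) (ψ : ℕ → ℝ) (x y : Fin n → Bool) :
    ∫ Θ, ψ (hammingDist (signNetwork Θ x) (signNetwork Θ y)) ∂weightMeas n T =
      (hammingStep n)^[T] ψ (hammingDist x y) := by
  induction T generalizing ψ with
  | zero => simp [signNetwork_zero]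
  | succ T ih =>
    rw [integral_signNetwork_pair_succ hn (fun x y => ψ (hammingDist x y)),
      Function.iterate_succ_apply, ← ih]
    simp only [pairMean_hammingDist, flipProb_eq_flipRate hn, hammingStep]

end Network

/-! ### Mean noise covariance of the network -/

section MeanCovariance

variable {n T : ℕ}

lemma pairMean_mono {p : ℝ} (hp₀ : 0 ≤ p) (hp₁ : p ≤ 1) {F G : (Fin n → Bool) → (Fin n → Bool) → ℝ}
    (h : ∀ ω η, F ω η ≤ G ω η) : pairMean n p F ≤ pairMean n p G := by
  have pairWeight_nonneg (ω η : Fin n → Bool) : 0 ≤ pairWeight n p ω η :=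
    mul_nonneg (by positivity) (prod_nonneg fun i _ => by split_ifs <;> linarith)
  exact sum_le_sum fun ω _ => sum_le_sum fun η _ =>
    mul_le_mul_of_nonneg_left (h ω η) (pairWeight_nonneg ω η)

lemma pairMean_sub_const (p : ℝ) (F : (Fin n → Bool) → (Fin n → Bool) → ℝ) (c : ℝ) :
    pairMean n p (fun ω η => F ω η - c) = pairMean n p F - c := by
  have pairMean_const : pairMean n p (fun _ _ => c) = c :=
    (pairMean_hammingDist n p fun _ => c).trans (binomMean_const n p c)
  conv_rhs => rw [← pairMean_const]
  simp only [pairMean, mul_sub, sum_sub_distrib]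

lemma integral_pairMean_signNetwork (p : ℝ) (F : (Fin n → Bool) → (Fin n → Bool) → ℝ) :
    ∫ Θ, pairMean n p (fun ω η => F (signNetwork Θ ω) (signNetwork Θ η)) ∂weightMeas n T =
      pairMean n p fun ω η => ∫ Θ, F (signNetwork Θ ω) (signNetwork Θ η) ∂weightMeas n T := by
  have hint (ω η : Fin n → Bool) : Integrable (fun Θ =>
      pairWeight n p ω η * F (signNetwork Θ ω) (signNetwork Θ η)) (weightMeas n T) :=
    integrable_signNetwork fun φ => pairWeight n p ω η * F (φ ω) (φ η)
  simp only [pairMean, integral_finsetSum _ fun ω _ => integrable_finsetSum _ fun η _ => hint ω η,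
    integral_finsetSum _ fun η _ => hint _ η, integral_const_mul]

lemma integral_unifMean_signNetwork_succ (hn : n ≠ 0) (g : (Fin n → Bool) → ℝ) :
    ∫ Θ, unifMean n (fun ω => g (signNetwork Θ ω)) ∂weightMeas n (T + 1) = unifMean n g := by
  have integral_eq (ω : Fin n → Bool) :
      ∫ Θ, g (signNetwork Θ ω) ∂weightMeas n (T + 1) = unifMean n g := by
    rw [integral_signNetwork_pair_succ hn (fun x _ => g x) ω ω]
    simp [flipProb, pairMean_zero]
  simpa only [pairMean_zero, integral_eq, unifMean_const] using
    integral_pairMean_signNetwork (T := T + 1) 0 fun x _ => g x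

-- The mean of `(E_ω g(ω_{T+1}))²` is at least the square of the mean, `(E g)²`, which is the term
-- subtracted in the covariance over the last layer.
lemma integral_noiseCov_signNetwork_succ_le (hn : n ≠ 0) (p : ℝ) (g : (Fin n → Bool) → ℝ) :
    ∫ Θ, noiseCov n p (fun ω => g (signNetwork Θ ω)) ∂weightMeas n (T + 1) ≤
      pairMean n p fun x y => ∫ Θ,
        noiseCov n (flipProb (signNetwork Θ x) (signNetwork Θ y)) g ∂weightMeas n T := by
  have sq_mean_le : unifMean n g ^ 2 ≤
      ∫ Θ, unifMean n (fun ω => g (signNetwork Θ ω)) ^ 2 ∂weightMeas n (T + 1) := by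
    have hmem : MemLp (fun Θ => unifMean n fun ω => g (signNetwork Θ ω)) 2
        (weightMeas n (T + 1)) :=
      (memLp_two_iff_integrable_sq (integrable_signNetwork fun φ =>
        unifMean n fun ω => g (φ ω)).aestronglyMeasurable).mpr
        (integrable_signNetwork fun φ => unifMean n (fun ω => g (φ ω)) ^ 2)
    have hvar := variance_nonneg (fun Θ => unifMean n fun ω => g (signNetwork Θ ω))
      (weightMeas n (T + 1))
    rw [variance_eq_sub hmem, integral_unifMean_signNetwork_succ hn] at hvar
    simpa using hvar
  calc ∫ Θ, noiseCov n p (fun ω => g (signNetwork Θ ω)) ∂weightMeas n (T + 1)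
      = (pairMean n p fun x y =>
            ∫ Θ, g (signNetwork Θ x) * g (signNetwork Θ y) ∂weightMeas n (T + 1)) -
          ∫ Θ, unifMean n (fun ω => g (signNetwork Θ ω)) ^ 2 ∂weightMeas n (T + 1) := by
        simp only [noiseCov]
        rw [integral_sub (integrable_signNetwork fun φ =>
            pairMean n p fun ω η => g (φ ω) * g (φ η))
          (integrable_signNetwork fun φ => unifMean n (fun ω => g (φ ω)) ^ 2),
          integral_pairMean_signNetwork p fun x y => g x * g y]
    _ ≤ (pairMean n p fun x y =>
            ∫ Θ, g (signNetwork Θ x) * g (signNetwork Θ y) ∂weightMeas n (T + 1)) -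
          unifMean n g ^ 2 := by gcongr
    _ = _ := by
        rw [← pairMean_sub_const]
        congr 1
        funext x y
        simp only [noiseCov]
        rw [integral_signNetwork_pair_succ hn fun x y => g x * g y, integral_sub
          (integrable_signNetwork fun φ => pairMean n (flipProb (φ x) (φ y)) fun x y => g x * g y)
          (integrable_const _), integral_const, probReal_univ, one_smul]

lemma noiseCov_flipProb_le (hn : n ≠ 0) (x y : Fin n → Bool) {g : (Fin n → Bool) → ℝ}
    (hg : ∀ ω, |g ω| ≤ 1) :
    noiseCov n (flipProb x y) g ≤ |1 - 2 * flipRate n (hammingDist x y)| := by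
  have mean_sq_le : unifMean n (fun ω => g ω ^ 2) ≤ 1 :=
    (unifMean_mono fun ω => (sq_le_one_iff_abs_le_one _).mpr (hg ω)).trans_eq (unifMean_const n 1)
  rw [← flipProb_eq_flipRate hn]
  exact (noiseCov_le (flipProb_nonneg x y) (flipProb_le_one x y) g).trans
    (mul_le_of_le_one_right (abs_nonneg _) mean_sq_le)

lemma integral_noiseCov_signNetwork_succ_le_binomMean (hn : n ≠ 0) {p : ℝ} (hp₀ : 0 ≤ p)
    (hp₁ : p ≤ 1) {g : (Fin n → Bool) → ℝ} (hg : ∀ ω, |g ω| ≤ 1) :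
    ∫ Θ, noiseCov n p (fun ω => g (signNetwork Θ ω)) ∂weightMeas n (T + 1) ≤
      binomMean n p ((hammingStep n)^[T] fun k => |1 - 2 * flipRate n k|) := by
  refine (integral_noiseCov_signNetwork_succ_le hn p g).trans ?_
  rw [← pairMean_hammingDist]
  refine pairMean_mono hp₀ hp₁ fun x y => ?_
  rw [← integral_hammingDist_signNetwork hn]
  exact integral_mono
    (integrable_signNetwork fun φ => noiseCov n (flipProb (φ x) (φ y)) g)
    (integrable_signNetwork fun φ => |1 - 2 * flipRate n (hammingDist (φ x) (φ y))|)
    fun Θ => noiseCov_flipProb_le hn _ _ hg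

-- The layers beyond depth `T` are absorbed into the observable.
lemma integral_noiseCov_signNetwork_add_le {p B : ℝ}
    (hB : ∀ g : (Fin n → Bool) → ℝ, (∀ ω, |g ω| ≤ 1) →
      ∫ Θ, noiseCov n p (fun ω => g (signNetwork Θ ω)) ∂weightMeas n T ≤ B)
    (m : ℕ) {g : (Fin n → Bool) → ℝ} (hg : ∀ ω, |g ω| ≤ 1) :
    ∫ Θ, noiseCov n p (fun ω => g (signNetwork Θ ω)) ∂weightMeas n (T + m) ≤ B := by
  induction m generalizing g with
  | zero => exact hB g hg
  | succ m ih =>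
    let Φ : ((Fin n → Bool) → Fin n → Bool) → ℝ := fun φ => noiseCov n p fun ω => g (φ ω)
    have hint := integrable_signLayer_signNetwork (T := T + m) Φ
    calc ∫ Θ, Φ (signNetwork Θ) ∂weightMeas n (T + m + 1)
        = ∫ θ, ∫ Θ, Φ (fun ω => signLayer θ (signNetwork Θ ω)) ∂weightMeas n (T + m)
            ∂layerMeas n := by
          rw [integral_signNetwork_succ, integral_prod _ hint]
      _ ≤ ∫ _θ, B ∂layerMeas n :=
          integral_mono hint.integral_prod_left (integrable_const B)
            fun θ => ih (g := fun x => g (signLayer θ x)) fun x => hg _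
      _ = B := by simp

lemma binomMean_potential_le_two_div (hn : 2 ≤ n) {p : ℝ} (hp₀ : 0 < p) (hp : p ≤ 1 / 2)
    (hnp : 1 ≤ n * p) : binomMean n p (fun k => potential (hammingCorr n k)) ≤ 2 / p := by
  have inv_le : 1 / (1 - p) ≤ 1 / p := one_div_le_one_div_of_le hp₀ (by linarith)
  have inv_sq_le : 1 / (1 - p) ^ 2 ≤ 1 / p ^ 2 :=
    one_div_le_one_div_of_le (by positivity) (by gcongr; linarith)
  have : (0 : ℝ) < n := by exact_mod_cast (by omega : 0 < n)
  calc binomMean n p (fun k => potential (hammingCorr n k))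
      ≤ 1 / 4 * (1 / p + 1 / (1 - p)) - 1 + 3 / (4 * n) * (1 / p ^ 2 + 1 / (1 - p) ^ 2) := by
        rw [← potential_one_sub_two_mul hp₀ (by linarith)]
        exact binomMean_potential_le hn hp₀ (by linarith)
    _ ≤ 1 / 4 * (1 / p + 1 / p) + 3 / (4 * n) * (1 / p ^ 2 + 1 / p ^ 2) := by
        refine add_le_add ?_ (by gcongr)
        linarith
    _ = 1 / (2 * p) + 3 / (2 * p) * (1 / (n * p)) := by
        field_simp
        ring
    _ ≤ 1 / (2 * p) + 3 / (2 * p) * 1 := by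
        gcongr
        rwa [div_le_one (by positivity)]
    _ = 2 / p := by
        field_simp
        ring

lemma binomMean_absorbed_le_two_div (hn : 0 < n) {p : ℝ} (hp₀ : 0 < p) (hp : p ≤ 1 / 2) :
    binomMean n p (absorbed n) ≤ 2 / (n * p) := by
  have : (0 : ℝ) < n := by exact_mod_cast hn
  calc binomMean n p (absorbed n)
      ≤ 1 / (n * p) + 1 / (n * (1 - p)) := binomMean_absorbed_le hn hp₀ (by linarith)
    _ ≤ 1 / (n * p) + 1 / (n * p) := by
        gcongr
        linarith
    _ = 2 / (n * p) := by ring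

theorem integral_noiseCov_signNetwork_le (hn : 176 ≤ n) {p : ℝ} (hp₀ : 0 < p) (hp : p ≤ 1 / 2)
    (hnp : 1 ≤ n * p) {s : ℝ} (hs : 0 < s) {t : ℕ} (ht : t + 1 ≤ T) {g : (Fin n → Bool) → ℝ}
    (hg : ∀ ω, |g ω| ≤ 1) :
    ∫ Θ, noiseCov n p (fun ω => g (signNetwork Θ ω)) ∂weightMeas n T ≤
      2 / (n * p) + (21 / 22) ^ t / (s * p) + s / 2 + t * ((4 + 4 / s) / √n) := by
  obtain ⟨m, rfl⟩ := Nat.exists_eq_add_of_le ht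
  refine integral_noiseCov_signNetwork_add_le (fun g hg => ?_) m hg
  have hp₁ : p ≤ 1 := by linarith
  calc ∫ Θ, noiseCov n p (fun ω => g (signNetwork Θ ω)) ∂weightMeas n (t + 1)
      ≤ binomMean n p ((hammingStep n)^[t] fun k => |1 - 2 * flipRate n k|) :=
        integral_noiseCov_signNetwork_succ_le_binomMean (by omega) hp₀.le hp₁ hg
    _ ≤ binomMean n p (lyapunovBound n ((21 / 22) ^ t * (1 / (2 * s)))
          (s / 2 + t * ((4 + 8 * (1 / (2 * s))) / √n))) :=
        binomMean_mono hp₀.le hp₁ <| iterate_hammingStep_le hn (by positivity)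
          (fun k hk => abs_one_sub_two_mul_flipRate_le (by omega) hk hs) t
    _ ≤ 2 / (n * p) + (21 / 22) ^ t * (1 / (2 * s)) * (2 / p) +
          (s / 2 + t * ((4 + 8 * (1 / (2 * s))) / √n)) := by
        rw [binomMean_lyapunovBound]
        gcongr
        · exact binomMean_absorbed_le_two_div (by omega) hp₀ hp
        · exact binomMean_potential_le_two_div (by omega) hp₀ hp hnp
    _ = 2 / (n * p) + (21 / 22) ^ t / (s * p) + s / 2 + t * ((4 + 4 / s) / √n) := by
        field_simp
        ring

end MeanCovariance

/-! ### Choice of the depth -/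

section Asymptotics

lemma log_one_div_nonneg {ε : ℝ} (hε₀ : 0 < ε) (hε₁ : ε ≤ 1) : 0 ≤ Real.log (1 / ε) :=
  Real.log_nonneg ((one_le_div hε₀).mpr hε₁)

lemma pow_natCeil_log_div_log_le {q ε : ℝ} (hq₀ : 0 < q) (hq₁ : q < 1) (hε : 0 < ε) :
    q ^ ⌈Real.log (1 / ε) / Real.log (1 / q)⌉₊ ≤ ε := by
  have hlog : 0 < Real.log (1 / q) := Real.log_pos ((one_lt_div hq₀).mpr hq₁)
  have hceil := (div_le_iff₀ hlog).mp (Nat.le_ceil (Real.log (1 / ε) / Real.log (1 / q)))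
  rw [← Real.log_le_log_iff (by positivity) hε, Real.log_pow]
  simp only [one_div, Real.log_inv] at hceil ⊢
  linarith

lemma exists_pow_le_mul_of_log {q c : ℝ} (hq₀ : 0 < q) (hq₁ : q < 1) (hc : 0 < c) :
    ∃ A B : ℝ, 0 ≤ A ∧ 0 ≤ B ∧
      ∀ ε, 0 < ε → ε ≤ 1 → ∃ t : ℕ, q ^ t ≤ c * ε ∧ (t : ℝ) ≤ A * Real.log (1 / ε) + B := by
  obtain ⟨m, hm⟩ := exists_pow_lt_of_lt_one hc hq₁
  have hlog : 0 < Real.log (1 / q) := Real.log_pos ((one_lt_div hq₀).mpr hq₁)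
  refine ⟨1 / Real.log (1 / q), m + 1, by positivity, by positivity, fun ε hε₀ hε₁ =>
    ⟨m + ⌈Real.log (1 / ε) / Real.log (1 / q)⌉₊, ?_, ?_⟩⟩
  · rw [pow_add]
    exact mul_le_mul hm.le (pow_natCeil_log_div_log_le hq₀ hq₁ hε₀) (by positivity) hc.le
  · have hceil := Nat.ceil_lt_add_one (div_nonneg (log_one_div_nonneg hε₀ hε₁) hlog.le)
    push_cast
    rw [one_div_mul_eq_div]
    linarith

lemma tendsto_mul_log_add_mul_div_sqrt (A B C : ℝ) :
    Tendsto (fun n : ℕ => (A * Real.log n + B) * (C / √n)) atTop (nhds 0) := by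
  have log_div_sqrt : Tendsto (fun x : ℝ => Real.log x / √x) atTop (nhds 0) := by
    simpa only [Real.sqrt_eq_rpow] using
      (isLittleO_log_rpow_atTop (by norm_num : (0 : ℝ) < 1 / 2)).tendsto_div_nhds_zero
  have inv_sqrt : Tendsto (fun x : ℝ => (√x)⁻¹) atTop (nhds 0) :=
    tendsto_inv_atTop_zero.comp Real.tendsto_sqrt_atTop
  have hsum := ((log_div_sqrt.const_mul (A * C)).add (inv_sqrt.const_mul (B * C))).comp
    tendsto_natCast_atTop_atTop
  simp only [mul_zero, add_zero] at hsum
  refine hsum.congr fun n => ?_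
  simp only [Function.comp_apply]
  ring

variable {ε : ℕ → ℝ} {T : ℕ → ℕ} {g : (n : ℕ) → (Fin n → Bool) → ℝ}

lemma eventually_mul_log_add_le (hε_pos : ∀ n, 0 < ε n) (hε_half : ∀ n, ε n ≤ 1 / 2)
    (hT : Tendsto (fun n => T n / Real.log (1 / ε n)) atTop atTop) (A : ℝ) {B : ℝ} (hB : 0 ≤ B) :
    ∀ᶠ n in atTop, A * Real.log (1 / ε n) + B ≤ T n := by
  filter_upwards [hT.eventually_ge_atTop (A + B / Real.log 2)] with n hTn
  have log_two_le : Real.log 2 ≤ Real.log (1 / ε n) :=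
    Real.log_le_log two_pos ((le_one_div two_pos (hε_pos n)).mpr (hε_half n))
  have log_two_pos : 0 < Real.log 2 := Real.log_pos one_lt_two
  calc A * Real.log (1 / ε n) + B
      = A * Real.log (1 / ε n) + B / Real.log 2 * Real.log 2 := by
        rw [div_mul_cancel₀ B log_two_pos.ne']
    _ ≤ A * Real.log (1 / ε n) + B / Real.log 2 * Real.log (1 / ε n) := by gcongr
    _ = (A + B / Real.log 2) * Real.log (1 / ε n) := by ring
    _ ≤ T n := (le_div_iff₀ (log_two_pos.trans_le log_two_le)).mp hTn

theorem eventually_integral_noiseCov_signNetwork_le (hε_pos : ∀ n, 0 < ε n)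
    (hε_half : ∀ n, ε n ≤ 1 / 2) (hnε : Tendsto (fun n : ℕ => (n : ℝ) * ε n) atTop atTop)
    (hT : Tendsto (fun n => T n / Real.log (1 / ε n)) atTop atTop)
    (hg : ∀ n ω, |g n ω| ≤ 1) {s : ℝ} (hs : 0 < s) :
    ∀ᶠ n in atTop,
      ∫ Θ, noiseCov n (ε n) (fun ω => g n (signNetwork Θ ω)) ∂weightMeas n (T n) ≤ s := by
  obtain ⟨A, B, hA, hB, exists_depth⟩ := exists_pow_le_mul_of_log (q := 21 / 22) (c := s * (s / 6))
    (by norm_num) (by norm_num) (by positivity)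
  have absorbed_lim : Tendsto (fun n : ℕ => 2 / (n * ε n)) atTop (nhds 0) := hnε.const_div_atTop 2
  have error_lim := tendsto_mul_log_add_mul_div_sqrt A B (4 + 4 / s)
  filter_upwards [eventually_ge_atTop 176, hnε.eventually_ge_atTop 1,
    eventually_mul_log_add_le hε_pos hε_half hT A (B := B + 1) (by positivity),
    absorbed_lim.eventually_le_const (by positivity : 0 < s / 6),
    error_lim.eventually_le_const (by positivity : 0 < s / 6)]
    with n hn hnp hTn absorbed_le error_le
  have hε := hε_pos n
  obtain ⟨t, pow_le, t_le⟩ := exists_depth (ε n) hε ((hε_half n).trans (by norm_num))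
  have depth_le : t + 1 ≤ T n := by
    have : (t : ℝ) + 1 ≤ T n := by linarith
    exact_mod_cast this
  have t_le_log : (t : ℝ) ≤ A * Real.log n + B := by
    refine t_le.trans ?_
    gcongr
    exact (div_le_iff₀ hε).mpr hnp
  have potential_le : (21 / 22) ^ t / (s * ε n) ≤ s / 6 := by
    rw [div_le_iff₀ (by positivity)]
    linarith
  calc ∫ Θ, noiseCov n (ε n) (fun ω => g n (signNetwork Θ ω)) ∂weightMeas n (T n)
      ≤ 2 / (n * ε n) + (21 / 22) ^ t / (s * ε n) + s / 2 + t * ((4 + 4 / s) / √n) :=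
        integral_noiseCov_signNetwork_le hn hε (hε_half n) hnp hs depth_le (hg n)
    _ ≤ s / 6 + s / 6 + s / 2 + s / 6 := by
        gcongr
        exact (mul_le_mul_of_nonneg_right t_le_log (by positivity)).trans error_le
    _ = s := by ring

lemma ofReal_one_sub_le_measure_le_of_integral_le_sq {α : Type*} [MeasurableSpace α]
    {μ : Measure α} [IsProbabilityMeasure μ] {f : α → ℝ} (hf₀ : 0 ≤ᵐ[μ] f) (hf : Integrable f μ)
    {δ : ℝ} (hδ : 0 < δ) (hint : ∫ x, f x ∂μ ≤ δ ^ 2) :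
    ENNReal.ofReal (1 - δ) ≤ μ {x | f x ≤ δ} := by
  have markov : μ.real {x | δ ≤ f x} ≤ δ := by
    refine le_of_mul_le_mul_left ?_ hδ
    exact (mul_meas_ge_le_integral_of_nonneg hf₀ hf δ).trans (hint.trans_eq (sq δ))
  have cover : (1 : ℝ) ≤ μ.real {x | f x ≤ δ} + μ.real {x | δ ≤ f x} := by
    rw [← probReal_univ (μ := μ)]
    exact (measureReal_mono fun x _ => le_total (f x) δ).trans (measureReal_union_le _ _)
  rw [← ofReal_measureReal]
  exact ENNReal.ofReal_le_ofReal (by linarith)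

end Asymptotics

theorem quenched_QNS_of_iid_weights_general
    (ε : ℕ → ℝ) (hε_pos : ∀ n, 0 < ε n) (hε_half : ∀ n, ε n ≤ 1 / 2)
    (hnε : Tendsto (fun n : ℕ => (n : ℝ) * ε n) atTop atTop)
    (T : ℕ → ℕ) (hT : Tendsto (fun n => T n / Real.log (1 / ε n)) atTop atTop)
    (g : (n : ℕ) → (Fin n → Bool) → ℝ) (hg : ∀ n ω, |g n ω| ≤ 1) (δ : ℝ) (hδ : 0 < δ) :
    ∃ N : ℕ, ∀ n ≥ N, ENNReal.ofReal (1 - δ) ≤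
      weightMeas n (T n) {Θ | noiseCov n (ε n) (fun ω => g n (signNetwork Θ ω)) ≤ δ} := by
  obtain ⟨N, hN⟩ := eventually_atTop.mp
    (eventually_integral_noiseCov_signNetwork_le hε_pos hε_half hnε hT hg (pow_pos hδ 2))
  exact ⟨N, fun n hn => ofReal_one_sub_le_measure_le_of_integral_le_sq
    (ae_of_all _ fun Θ => noiseCov_nonneg (hε_half n) _)
    (integrable_signNetwork fun φ => noiseCov n (ε n) fun ω => g n (φ ω)) hδ (hN n hn)⟩

/-- for the fully connected sign network with i.i.d. standard normal weights,
if `1/2 ≥ ε_n ↓ 0` with `n ε_n → ∞`, `K_n / log(1/ε_n) → ∞` and `T_n ≥ K_n`, then for any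
Boolean functions `h_n` the network output is quenched quantitatively noise sensitive at
level `{ε_n}`: for every `δ > 0`, eventually the weights satisfy
`Cov_{ω,ω^{ε_n}}(f(ω), f(ω^{ε_n})) ≤ δ` with probability at least `1 - δ`. -/
theorem quenched_QNS_of_iid_weights
    (ε : ℕ → ℝ) (hε_pos : ∀ n, 0 < ε n) (hε_half : ∀ n, ε n ≤ 1 / 2)
    (hε_anti : Antitone ε) (hε_lim : Tendsto ε atTop (nhds 0))
    (hnε : Tendsto (fun n : ℕ => (n : ℝ) * ε n) atTop atTop)
    (K : ℕ → ℝ) (hK : Tendsto (fun n => K n / Real.log (1 / ε n)) atTop atTop)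
    (T : ℕ → ℕ) (hT : ∀ n, K n ≤ (T n : ℝ))
    (h : (n : ℕ) → (Fin n → Bool) → Bool) :
    ∀ δ : ℝ, 0 < δ → ∃ N : ℕ, ∀ n ≥ N,
      ENNReal.ofReal (1 - δ) ≤
        weightMeas n (T n) {Θ | noiseCov n (ε n) (netOut n (T n) (h n) Θ) ≤ δ} := by
  have log_nonneg (n : ℕ) := log_one_div_nonneg (hε_pos n) ((hε_half n).trans (by norm_num))
  exact quenched_QNS_of_iid_weights_general ε hε_pos hε_half hnε T
    (tendsto_atTop_mono (fun n => div_le_div_of_nonneg_right (hT n) (log_nonneg n)) hK)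
    (fun n ω => chi (h n ω)) (fun n ω => (abs_chi (h n ω)).le)

end
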